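/- arXiv:1501.02360 — 3 statements merged into one kernel-verified Lean document; each statement's English description precedes it below -/
import Mathlib

section
/- (Maschke-type theorem, surjective case.) Let (H, A, C) be a Doi Hom-Hopf datum admitting a normalized (A,β)-integral θ : C⊗C → A, and let f : (M,μ) → (N,ν) be a morphism of Doi Hom-Hopf modules. If there exists a k-linear map g : N → M with g∘ν = μ∘g, g(n·a) = g(n)·a for all n ∈ N, a ∈ A, and f∘g = id_N (i.e. f splits as a morphism of right (A,β)-Hom-modules), then there exists a morphism of Doi Hom-Hopf modules g' : N → M with f∘g' = id_N (i.e. f splits in the category of Doi Hom-Hopf modules). -/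
open TensorProduct

namespace DoiHomHopf

/-- A monoidal Hom-algebra `(A, β)`. -/
structure HomAlg (k : Type*) [CommRing k] (A : Type*) [AddCommGroup A] [Module k A] where
  str : A ≃ₗ[k] A
  mul : A →ₗ[k] A →ₗ[k] A
  one : A
  str_mul : ∀ a b, str (mul a b) = mul (str a) (str b)
  str_one : str one = one
  hom_assoc : ∀ a b c, mul (str a) (mul b c) = mul (mul a b) (str c)
  mul_one : ∀ a, mul a one = str a
  one_mul : ∀ a, mul one a = str a

/-- A monoidal Hom-coalgebra `(C, γ)`. -/
structure HomCoalg (k : Type*) [CommRing k] (C : Type*) [AddCommGroup C] [Module k C] where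
  str : C ≃ₗ[k] C
  comul : C →ₗ[k] C ⊗[k] C
  counit : C →ₗ[k] k
  comul_str : ∀ c, comul (str c) = TensorProduct.map str.toLinearMap str.toLinearMap (comul c)
  counit_str : ∀ c, counit (str c) = counit c
  hom_coassoc : ∀ c,
    TensorProduct.map str.symm.toLinearMap comul (comul c) =
      TensorProduct.assoc k C C C (TensorProduct.map comul str.symm.toLinearMap (comul c))
  counit_comul_left : ∀ c,
    TensorProduct.lid k C (TensorProduct.map counit LinearMap.id (comul c)) = str.symm c
  counit_comul_right : ∀ c,
    TensorProduct.rid k C (TensorProduct.map LinearMap.id counit (comul c)) = str.symm c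

/-- A monoidal Hom-bialgebra. -/
structure HomBialg (k : Type*) [CommRing k] (H : Type*) [AddCommGroup H] [Module k H]
    extends HomAlg k H, HomCoalg k H where
  comul_mul : ∀ a b, comul (mul a b) = TensorProduct.map₂ mul mul (comul a) (comul b)
  comul_one : comul one = one ⊗ₜ[k] one
  counit_mul : ∀ a b, counit (mul a b) = counit a * counit b
  counit_one : counit one = 1

/-- A monoidal Hom-Hopf algebra `(H, α)` with antipode `S`. -/
structure HomHopf (k : Type*) [CommRing k] (H : Type*) [AddCommGroup H] [Module k H]
    extends HomBialg k H where
  S : H →ₗ[k] H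
  S_mul_comul : ∀ h,
    TensorProduct.lift mul (TensorProduct.map S LinearMap.id (comul h)) = counit h • one
  mul_S_comul : ∀ h,
    TensorProduct.lift mul (TensorProduct.map LinearMap.id S (comul h)) = counit h • one
  S_str : ∀ h, S (str h) = str (S h)

/-- A right `(A, β)`-Hom-module `(M, μ)`. -/
structure HomMod {k : Type*} [CommRing k] {A : Type*} [AddCommGroup A] [Module k A]
    (hA : HomAlg k A) (M : Type*) [AddCommGroup M] [Module k M] where
  str : M ≃ₗ[k] M
  act : M →ₗ[k] A →ₗ[k] M
  act_act : ∀ m a b, act (act m a) (hA.str b) = act (str m) (hA.mul a b)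
  act_one : ∀ m, act m hA.one = str m
  str_act : ∀ m a, str (act m a) = act (str m) (hA.str a)

/-- A right `(C, γ)`-Hom-comodule `(M, μ)`. -/
structure HomComod {k : Type*} [CommRing k] {C : Type*} [AddCommGroup C] [Module k C]
    (hC : HomCoalg k C) (M : Type*) [AddCommGroup M] [Module k M] where
  str : M ≃ₗ[k] M
  coact : M →ₗ[k] M ⊗[k] C
  hom_coassoc : ∀ m,
    TensorProduct.assoc k M C C
        (TensorProduct.map coact hC.str.symm.toLinearMap (coact m)) =
      TensorProduct.map str.symm.toLinearMap hC.comul (coact m)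
  counit_coact : ∀ m,
    TensorProduct.rid k M (TensorProduct.map LinearMap.id hC.counit (coact m)) = str.symm m
  coact_str : ∀ m, coact (str m) = TensorProduct.map str.toLinearMap hC.str.toLinearMap (coact m)

/-- A right `(H, α)`-Hom-comodule algebra `(A, β)`. -/
structure HomComodAlg {k : Type*} [CommRing k] {H : Type*} [AddCommGroup H] [Module k H]
    (hH : HomBialg k H) (A : Type*) [AddCommGroup A] [Module k A] extends HomAlg k A where
  coact : A →ₗ[k] A ⊗[k] H
  hom_coassoc : ∀ a,
    TensorProduct.assoc k A H H
        (TensorProduct.map coact hH.str.symm.toLinearMap (coact a)) =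
      TensorProduct.map str.symm.toLinearMap hH.comul (coact a)
  counit_coact : ∀ a,
    TensorProduct.rid k A (TensorProduct.map LinearMap.id hH.counit (coact a)) = str.symm a
  coact_str : ∀ a, coact (str a) = TensorProduct.map str.toLinearMap hH.str.toLinearMap (coact a)
  coact_mul : ∀ a b, coact (mul a b) = TensorProduct.map₂ mul hH.mul (coact a) (coact b)
  coact_one : coact one = one ⊗ₜ[k] hH.one

/-- A right `(H, α)`-Hom-module coalgebra `(C, γ)`. -/
structure HomModCoalg {k : Type*} [CommRing k] {H : Type*} [AddCommGroup H] [Module k H]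
    (hH : HomBialg k H) (C : Type*) [AddCommGroup C] [Module k C] extends HomCoalg k C where
  act : C →ₗ[k] H →ₗ[k] C
  act_act : ∀ c h g, act (act c h) (hH.str g) = act (str c) (hH.mul h g)
  act_one : ∀ c, act c hH.one = str c
  str_act : ∀ c h, str (act c h) = act (str c) (hH.str h)
  comul_act : ∀ c h, comul (act c h) = TensorProduct.map₂ act act (comul c) (hH.comul h)
  counit_act : ∀ c h, counit (act c h) = counit c * hH.counit h

/-- A Doi Hom-Hopf module `(M, μ)` over the Doi Hom-Hopf datum `(H, A, C)`. -/
structure DoiMod {k : Type*} [CommRing k] {H A C : Type*}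
    [AddCommGroup H] [Module k H] [AddCommGroup A] [Module k A] [AddCommGroup C] [Module k C]
    {hH : HomBialg k H} (hA : HomComodAlg hH A) (hC : HomModCoalg hH C)
    (M : Type*) [AddCommGroup M] [Module k M] where
  str : M ≃ₗ[k] M
  act : M →ₗ[k] A →ₗ[k] M
  coact : M →ₗ[k] M ⊗[k] C
  act_act : ∀ m a b, act (act m a) (hA.str b) = act (str m) (hA.mul a b)
  act_one : ∀ m, act m hA.one = str m
  str_act : ∀ m a, str (act m a) = act (str m) (hA.str a)
  hom_coassoc : ∀ m,
    TensorProduct.assoc k M C C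
        (TensorProduct.map coact hC.str.symm.toLinearMap (coact m)) =
      TensorProduct.map str.symm.toLinearMap hC.comul (coact m)
  counit_coact : ∀ m,
    TensorProduct.rid k M (TensorProduct.map LinearMap.id hC.counit (coact m)) = str.symm m
  coact_str : ∀ m, coact (str m) = TensorProduct.map str.toLinearMap hC.str.toLinearMap (coact m)
  compat : ∀ m a,
    coact (act m a) = TensorProduct.map₂ act hC.act (coact m) (hA.coact a)

/-- `f` is a morphism of Doi Hom-Hopf modules. -/
structure IsDoiHom {k : Type*} [CommRing k] {H A C : Type*}
    [AddCommGroup H] [Module k H] [AddCommGroup A] [Module k A] [AddCommGroup C] [Module k C]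
    {hH : HomBialg k H} {hA : HomComodAlg hH A} {hC : HomModCoalg hH C}
    {M N : Type*} [AddCommGroup M] [Module k M] [AddCommGroup N] [Module k N]
    (dM : DoiMod hA hC M) (dN : DoiMod hA hC N) (f : M →ₗ[k] N) : Prop where
  str_comm : ∀ m, f (dM.str m) = dN.str (f m)
  act_comm : ∀ m a, f (dM.act m a) = dN.act (f m) a
  coact_comm : ∀ m, dN.coact (f m) = TensorProduct.map f LinearMap.id (dM.coact m)

/-- A normalized `(A, β)`-integral `θ : C ⊗ C → A` for the Doi Hom-Hopf datum `(H, A, C)`. -/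
structure NIntegral {k : Type*} [CommRing k] {H A C : Type*}
    [AddCommGroup H] [Module k H] [AddCommGroup A] [Module k A] [AddCommGroup C] [Module k C]
    {hH : HomBialg k H} (hA : HomComodAlg hH A) (hC : HomModCoalg hH C) where
  θ : C ⊗[k] C →ₗ[k] A
  θ_str : ∀ c d, θ (hC.str c ⊗ₜ[k] hC.str d) = hA.str (θ (c ⊗ₜ[k] d))
  cond1 : ∀ c d : C,
    TensorProduct.map (TensorProduct.curry θ (hC.str.symm d)) hC.str.toLinearMap (hC.comul c) =
      TensorProduct.map hA.str.toLinearMap (TensorProduct.lift hC.act)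
        ((TensorProduct.assoc k A C H)
          (TensorProduct.map (TensorProduct.comm k C A).toLinearMap LinearMap.id
            ((TensorProduct.assoc k C A H).symm
              (TensorProduct.map LinearMap.id
                (hA.coact ∘ₗ (TensorProduct.curry θ).flip (hC.str.symm c)) (hC.comul d)))))
  cond2 : ∀ c, θ (hC.comul c) = hC.counit c • hA.one
  cond3 : ∀ (a : A) (c d : C),
    TensorProduct.lift hA.mul
      (TensorProduct.map LinearMap.id θ
        ((TensorProduct.assoc k A C C)
          (TensorProduct.map
            (TensorProduct.map (hA.str.toLinearMap ∘ₗ hA.str.toLinearMap)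
              (hC.act (hC.str.symm d)))
            (hC.act (hC.str.symm c))
            (TensorProduct.map hA.coact hH.str.symm.toLinearMap (hA.coact a))))) =
      hA.mul (θ (d ⊗ₜ[k] c)) a

/-- The right `A`-action on `M ⊗ C` given by `(m ⊗ c) · a = m · a₀ ⊗ c · a₁`. -/
noncomputable def Gact {k : Type*} [CommRing k] {H A C : Type*}
    [AddCommGroup H] [Module k H] [AddCommGroup A] [Module k A] [AddCommGroup C] [Module k C]
    {hH : HomBialg k H} (hA : HomComodAlg hH A) (hC : HomModCoalg hH C)
    {M : Type*} [AddCommGroup M] [Module k M] (act : M →ₗ[k] A →ₗ[k] M) :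
    (M ⊗[k] C) →ₗ[k] A →ₗ[k] (M ⊗[k] C) :=
  (TensorProduct.map₂ act hC.act).compl₂ hA.coact

/-- The right `C`-coaction on `M ⊗ C` given by `ρ(m ⊗ c) = (μ⁻¹(m) ⊗ c₁) ⊗ γ(c₂)`. -/
noncomputable def Gcoact {k : Type*} [CommRing k] {C : Type*} [AddCommGroup C] [Module k C]
    (hC : HomCoalg k C) {M : Type*} [AddCommGroup M] [Module k M] (str : M ≃ₗ[k] M) :
    (M ⊗[k] C) →ₗ[k] (M ⊗[k] C) ⊗[k] C :=
  (TensorProduct.assoc k M C C).symm.toLinearMap ∘ₗ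
    TensorProduct.map str.symm.toLinearMap
      (TensorProduct.map LinearMap.id hC.str.toLinearMap ∘ₗ hC.comul)

/-- The counit of the adjunction: `δ_N(n ⊗ c) = ε(c) ν(n)`. -/
noncomputable def deltaMap {k : Type*} [CommRing k] {C : Type*} [AddCommGroup C] [Module k C]
    (hC : HomCoalg k C) {N : Type*} [AddCommGroup N] [Module k N] (str : N ≃ₗ[k] N) :
    (N ⊗[k] C) →ₗ[k] N :=
  str.toLinearMap ∘ₗ (TensorProduct.rid k N).toLinearMap ∘ₗ
    TensorProduct.map LinearMap.id hC.counit

/-- The map `ν_M : M ⊗ C → M`, `ν_M(m ⊗ c) = μ(m₀) · θ(m₁ ⊗ γ⁻¹(c))`. -/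
noncomputable def nuMap {k : Type*} [CommRing k] {H A C : Type*}
    [AddCommGroup H] [Module k H] [AddCommGroup A] [Module k A] [AddCommGroup C] [Module k C]
    {hH : HomBialg k H} {hA : HomComodAlg hH A} {hC : HomModCoalg hH C}
    {M : Type*} [AddCommGroup M] [Module k M]
    (θ : C ⊗[k] C →ₗ[k] A) (d : DoiMod hA hC M) : (M ⊗[k] C) →ₗ[k] M :=
  TensorProduct.lift d.act ∘ₗ TensorProduct.map d.str.toLinearMap θ ∘ₗ
    (TensorProduct.assoc k M C C).toLinearMap ∘ₗ
    TensorProduct.map d.coact hC.str.symm.toLinearMap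

end DoiHomHopf

open DoiHomHopf

/-!
The splitting is the average of `g` against the integral,
`g' = ν_M ∘ (g ⊗ id) ∘ ρ_N`, that is `g'(n) = μ(g(n₀)₀) · θ(g(n₀)₁ ⊗ γ⁻¹(n₁))`.
Condition (4.3) makes `ν_M : M ⊗ C → M` right `A`-linear and condition (4.1) makes it right
`C`-colinear, so `g'` is a morphism of Doi Hom-Hopf modules as soon as `g` is `A`-linear;
compatibility with the structure automorphisms is the case `a = 1` of `A`-linearity.
Since `ν` is natural, `f ∘ g' = ν_N ∘ ((f ∘ g) ⊗ id) ∘ ρ_N = ν_N ∘ ρ_N`, which is the identity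
by the normalization (4.2).
-/

namespace DoiHomHopf

section TensorProduct

variable {k : Type*} [CommRing k] {M N P Q : Type*}
  [AddCommGroup M] [Module k M] [AddCommGroup N] [Module k N]
  [AddCommGroup P] [Module k P] [AddCommGroup Q] [Module k Q]

theorem map_lift_assoc_symm_tmul (p : M →ₗ[k] N →ₗ[k] P) (m : M) (t : N ⊗[k] Q) :
    map (lift p) LinearMap.id ((TensorProduct.assoc k M N Q).symm (m ⊗ₜ[k] t)) =
      map (p m) LinearMap.id t := by
  induction t with
  | zero => simp
  | tmul n q => simp
  | add t u ht hu => simp only [tmul_add, map_add, ht, hu]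

theorem map_map₂_of_intertwines {M' N' P' Q' R R' : Type*}
    [AddCommGroup M'] [Module k M'] [AddCommGroup N'] [Module k N']
    [AddCommGroup P'] [Module k P'] [AddCommGroup Q'] [Module k Q']
    [AddCommGroup R] [Module k R] [AddCommGroup R'] [Module k R']
    {S S' : Type*} [AddCommGroup S] [Module k S] [AddCommGroup S'] [Module k S']
    {p : M →ₗ[k] N →ₗ[k] R} {p' : M' →ₗ[k] N' →ₗ[k] R'}
    {q : P →ₗ[k] Q →ₗ[k] S} {q' : P' →ₗ[k] Q' →ₗ[k] S'}
    {fM : M →ₗ[k] M'} {fN : N →ₗ[k] N'} {fR : R →ₗ[k] R'}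
    {fP : P →ₗ[k] P'} {fQ : Q →ₗ[k] Q'} {fS : S →ₗ[k] S'}
    (hp : ∀ m n, fR (p m n) = p' (fM m) (fN n)) (hq : ∀ x y, fS (q x y) = q' (fP x) (fQ y))
    (x : M ⊗[k] P) (y : N ⊗[k] Q) :
    map fR fS (map₂ p q x y) = map₂ p' q' (map fM fP x) (map fN fQ y) := by
  induction x with
  | zero => simp
  | add x x' hx hx' => simp only [map_add, LinearMap.add_apply, hx, hx']
  | tmul m c =>
    induction y with
    | zero => simp
    | add y y' hy hy' => simp only [map_add, hy, hy']
    | tmul n d => simp only [map_tmul, map₂_apply_tmul, hp, hq]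

end TensorProduct

section Datum

variable {k : Type*} [CommRing k] {H A C M N : Type*}
  [AddCommGroup H] [Module k H] [AddCommGroup A] [Module k A] [AddCommGroup C] [Module k C]
  [AddCommGroup M] [Module k M] [AddCommGroup N] [Module k N] {hH : HomBialg k H}

theorem HomAlg.str_symm_mul (hA : HomAlg k A) (a b : A) :
    hA.str.symm (hA.mul a b) = hA.mul (hA.str.symm a) (hA.str.symm b) := by
  simp [LinearEquiv.symm_apply_eq, hA.str_mul]

theorem HomModCoalg.str_symm_act (hC : HomModCoalg hH C) (c : C) (h : H) :
    hC.str.symm (hC.act c h) = hC.act (hC.str.symm c) (hH.str.symm h) := by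
  simp [LinearEquiv.symm_apply_eq, hC.str_act]

/-- The entwining map `c ⊗ a ↦ a₀ ⊗ c · a₁` attached to the datum `(H, A, C)`; it packages the
`H`-coaction on `A` and the `H`-action on `C`, which enter condition (4.1) and the compatibility
law of Doi Hom-Hopf modules only through it. -/
noncomputable def entwining (hA : HomComodAlg hH A) (hC : HomModCoalg hH C) :
    C ⊗[k] A →ₗ[k] A ⊗[k] C :=
  map LinearMap.id (lift hC.act) ∘ₗ (TensorProduct.assoc k A C H).toLinearMap ∘ₗ
    map (TensorProduct.comm k C A).toLinearMap LinearMap.id ∘ₗ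
    (TensorProduct.assoc k C A H).symm.toLinearMap ∘ₗ map LinearMap.id hA.coact

variable {hA : HomComodAlg hH A} {hC : HomModCoalg hH C}

theorem entwining_tmul (c : C) (a : A) :
    entwining hA hC (c ⊗ₜ[k] a) = map LinearMap.id (hC.act c) (hA.coact a) := by
  simp only [entwining, LinearMap.comp_apply, map_tmul, LinearMap.id_apply, LinearEquiv.coe_coe]
  induction hA.coact a with
  | zero => simp
  | tmul b h => simp
  | add x y hx hy => simp only [tmul_add, map_add, hx, hy]

theorem entwining_map_str (x : C ⊗[k] A) :
    entwining hA hC (map hC.str.toLinearMap hA.str.toLinearMap x) =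
      map hA.str.toLinearMap hC.str.toLinearMap (entwining hA hC x) := by
  induction x with
  | zero => simp
  | add x y hx hy => simp only [map_add, hx, hy]
  | tmul c a =>
    have str_act : hC.act (hC.str c) ∘ₗ hH.str.toLinearMap = hC.str.toLinearMap ∘ₗ hC.act c :=
      LinearMap.ext fun h => (hC.str_act c h).symm
    simp only [map_tmul, LinearEquiv.coe_coe, entwining_tmul, hA.coact_str, map_map, str_act,
      LinearMap.id_comp, LinearMap.comp_id]

theorem DoiMod.coact_act (dM : DoiMod hA hC M) (m : M) (a : A) :
    dM.coact (dM.act m a) =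
      map (lift dM.act) LinearMap.id ((TensorProduct.assoc k M A C).symm
        (map LinearMap.id (entwining hA hC)
          (TensorProduct.assoc k M C A (dM.coact m ⊗ₜ[k] a)))) := by
  rw [dM.compat]
  induction dM.coact m with
  | zero => simp
  | add x y hx hy => simp only [add_tmul, map_add, LinearMap.add_apply, hx, hy]
  | tmul n c =>
    simp only [assoc_tmul, map_tmul, map_lift_assoc_symm_tmul, entwining_tmul, LinearMap.id_apply,
      map_map, LinearMap.id_comp, LinearMap.comp_id]
    rfl

theorem DoiMod.coact_str_symm (dM : DoiMod hA hC M) (m : M) :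
    dM.coact (dM.str.symm m) =
      map dM.str.symm.toLinearMap hC.str.symm.toLinearMap (dM.coact m) := by
  obtain ⟨n, rfl⟩ := dM.str.surjective m
  simp [dM.coact_str, map_map]

theorem DoiMod.act_act_eq (dM : DoiMod hA hC M) (m : M) (a b : A) :
    dM.act (dM.act m a) b = dM.act (dM.str m) (hA.mul a (hA.str.symm b)) := by
  rw [← dM.act_act, LinearEquiv.apply_symm_apply]

theorem map_str_of_map_act {dM : DoiMod hA hC M} {dN : DoiMod hA hC N} {g : N →ₗ[k] M}
    (hg : ∀ n a, g (dN.act n a) = dM.act (g n) a) (n : N) : g (dN.str n) = dM.str (g n) := by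
  rw [← dN.act_one, hg, dM.act_one]

theorem Gact_map {actM : M →ₗ[k] A →ₗ[k] M} {actN : N →ₗ[k] A →ₗ[k] N} {g : N →ₗ[k] M}
    (hg : ∀ n a, g (actN n a) = actM (g n) a) (x : N ⊗[k] C) (a : A) :
    map g LinearMap.id (Gact hA hC actN x a) = Gact hA hC actM (map g LinearMap.id x) a := by
  simpa [Gact] using map_map₂_of_intertwines (fN := LinearMap.id) (fQ := LinearMap.id)
    (fS := LinearMap.id) (q' := hC.act) hg (fun _ _ => rfl) x (hA.coact a)

end Datum

section Gcoact

variable {k : Type*} [CommRing k] {C M N : Type*} [AddCommGroup C] [Module k C]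
  [AddCommGroup M] [Module k M] [AddCommGroup N] [Module k N]

theorem Gcoact_apply (hC : HomCoalg k C) (μ : M ≃ₗ[k] M) (x : M ⊗[k] C) :
    Gcoact hC μ x = map LinearMap.id hC.str.toLinearMap
      ((TensorProduct.assoc k M C C).symm (map μ.symm.toLinearMap hC.comul x)) := by
  simp only [Gcoact, ← map_id, map_map_assoc_symm, LinearMap.comp_apply, LinearEquiv.coe_coe,
    map_map, LinearMap.id_comp]

theorem Gcoact_map (hC : HomCoalg k C) {μ : M ≃ₗ[k] M} {ν : N ≃ₗ[k] N} {g : N →ₗ[k] M}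
    (hg : ∀ n, g (ν n) = μ (g n)) (x : N ⊗[k] C) :
    Gcoact hC μ (map g LinearMap.id x) =
      map (map g LinearMap.id) LinearMap.id (Gcoact hC ν x) := by
  have str_symm : μ.symm.toLinearMap ∘ₗ g = g ∘ₗ ν.symm.toLinearMap := by
    ext n
    simp [LinearEquiv.symm_apply_eq, ← hg]
  simp only [Gcoact, LinearMap.comp_apply, LinearEquiv.coe_coe, map_map, map_map_assoc_symm,
    str_symm, map_id, LinearMap.id_comp, LinearMap.comp_id]

theorem DoiMod.Gcoact_coact {H A : Type*} [AddCommGroup H] [Module k H] [AddCommGroup A]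
    [Module k A] {hH : HomBialg k H} {hA : HomComodAlg hH A} {hC : HomModCoalg hH C}
    (dN : DoiMod hA hC N) (n : N) :
    Gcoact hC.toHomCoalg dN.str (dN.coact n) = map dN.coact LinearMap.id (dN.coact n) := by
  rw [Gcoact_apply, ← dN.hom_coassoc, LinearEquiv.symm_apply_apply, map_map]
  simp

end Gcoact

section Integral

variable {k : Type*} [CommRing k] {H A C M N : Type*}
  [AddCommGroup H] [Module k H] [AddCommGroup A] [Module k A] [AddCommGroup C] [Module k C]
  [AddCommGroup M] [Module k M] [AddCommGroup N] [Module k N] {hH : HomBialg k H}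
  {hA : HomComodAlg hH A} {hC : HomModCoalg hH C}

theorem NIntegral.str_symm_θ (θi : NIntegral hA hC) (c d : C) :
    hA.str.symm (θi.θ (c ⊗ₜ[k] d)) = θi.θ (hC.str.symm c ⊗ₜ[k] hC.str.symm d) := by
  simp [LinearEquiv.symm_apply_eq, ← θi.θ_str]

theorem NIntegral.entwining_comul (θi : NIntegral hA hC) (c d : C) :
    entwining hA hC
        (map hC.str.toLinearMap ((curry θi.θ).flip c ∘ₗ hC.str.toLinearMap) (hC.comul d)) =
      map (curry θi.θ (hC.str.symm d)) (hC.str.toLinearMap ∘ₗ hC.str.toLinearMap)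
        (hC.comul c) := by
  have θ_str : (curry θi.θ).flip c ∘ₗ hC.str.toLinearMap =
      hA.str.toLinearMap ∘ₗ (curry θi.θ).flip (hC.str.symm c) := by
    ext e
    simp [← θi.θ_str]
  have cond1 : map (curry θi.θ (hC.str.symm d)) hC.str.toLinearMap (hC.comul c) =
      map hA.str.toLinearMap LinearMap.id (entwining hA hC
        (map LinearMap.id ((curry θi.θ).flip (hC.str.symm c)) (hC.comul d))) := by
    rw [θi.cond1]
    simp [entwining, map_map]
  calc
    _ = entwining hA hC (map hC.str.toLinearMap hA.str.toLinearMap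
          (map LinearMap.id ((curry θi.θ).flip (hC.str.symm c)) (hC.comul d))) := by
      rw [θ_str, map_map, LinearMap.comp_id]
    _ = map LinearMap.id hC.str.toLinearMap (map hA.str.toLinearMap LinearMap.id
          (entwining hA hC
            (map LinearMap.id ((curry θi.θ).flip (hC.str.symm c)) (hC.comul d)))) := by
      rw [entwining_map_str, map_map, LinearMap.comp_id, LinearMap.id_comp]
    _ = _ := by rw [← cond1, map_map, LinearMap.id_comp]

/-- The map `(m ⊗ d) ⊗ c ↦ μ(m) · θ(d ⊗ c)`, through which `nuMap` factors as
`ν_M(m ⊗ c) = integralAct (ρ(m) ⊗ γ⁻¹(c))`. -/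
noncomputable def integralAct (θ : C ⊗[k] C →ₗ[k] A) (dM : DoiMod hA hC M) :
    (M ⊗[k] C) ⊗[k] C →ₗ[k] M :=
  lift dM.act ∘ₗ map dM.str.toLinearMap θ ∘ₗ (TensorProduct.assoc k M C C).toLinearMap

theorem integralAct_tmul (θ : C ⊗[k] C →ₗ[k] A) (dM : DoiMod hA hC M) (m : M) (c d : C) :
    integralAct θ dM ((m ⊗ₜ[k] d) ⊗ₜ[k] c) = dM.act (dM.str m) (θ (d ⊗ₜ[k] c)) := rfl

theorem nuMap_apply (θ : C ⊗[k] C →ₗ[k] A) (dM : DoiMod hA hC M) (x : M ⊗[k] C) :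
    nuMap θ dM x = integralAct θ dM (map dM.coact hC.str.symm.toLinearMap x) := rfl

theorem integralAct_map₂_tmul (θ : C ⊗[k] C →ₗ[k] A) (dM : DoiMod hA hC M) (m : M) (c d : C)
    (z : (A ⊗[k] H) ⊗[k] H) :
    integralAct θ dM (map₂ (map₂ dM.act hC.act) hC.act ((m ⊗ₜ[k] d) ⊗ₜ[k] c) z) =
      dM.act (dM.str (dM.str m)) (hA.str.symm (lift hA.mul (map LinearMap.id θ
        (TensorProduct.assoc k A C C (map (map (hA.str.toLinearMap ∘ₗ hA.str.toLinearMap)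
          (hC.act d)) (hC.act c) z))))) := by
  induction z with
  | zero => simp
  | add x y hx hy => simp only [map_add, hx, hy]
  | tmul w h =>
    induction w with
    | zero => simp
    | add x y hx hy => simp only [map_add, add_tmul, hx, hy]
    | tmul b g => simp [integralAct_tmul, hA.str_symm_mul, dM.str_act, dM.act_act_eq]

theorem integralAct_act (θi : NIntegral hA hC) (dM : DoiMod hA hC M)
    (w : (M ⊗[k] C) ⊗[k] C) (a : A) :
    integralAct θi.θ dM (map₂ (map₂ dM.act hC.act) hC.act w
        (map hA.coact hH.str.symm.toLinearMap (hA.coact a))) =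
      dM.act (integralAct θi.θ dM w) a := by
  induction w with
  | zero => simp
  | add x y hx hy => simp only [map_add, LinearMap.add_apply, hx, hy]
  | tmul x c =>
    induction x with
    | zero => simp
    | add x y hx hy => simp only [map_add, add_tmul, LinearMap.add_apply, hx, hy]
    | tmul m d =>
      have cond3 := θi.cond3 a (hC.str c) (hC.str d)
      simp only [LinearEquiv.symm_apply_apply] at cond3
      rw [integralAct_map₂_tmul, cond3, hA.str_symm_mul, θi.str_symm_θ, integralAct_tmul,
        dM.act_act_eq, LinearEquiv.symm_apply_apply, LinearEquiv.symm_apply_apply]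

theorem nuMap_Gact (θi : NIntegral hA hC) (dM : DoiMod hA hC M) (x : M ⊗[k] C) (a : A) :
    nuMap θi.θ dM (Gact hA hC dM.act x a) = dM.act (nuMap θi.θ dM x) a := by
  rw [nuMap_apply, nuMap_apply, ← integralAct_act, Gact, LinearMap.compl₂_apply,
    map_map₂_of_intertwines dM.compat hC.str_symm_act]

theorem coact_integralAct_tmul (θ : C ⊗[k] C →ₗ[k] A) (dM : DoiMod hA hC M)
    (x : M ⊗[k] C) (c : C) :
    dM.coact (integralAct θ dM (x ⊗ₜ[k] c)) =
      map (lift dM.act) LinearMap.id ((TensorProduct.assoc k M A C).symm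
        (map dM.str.toLinearMap
          (entwining hA hC ∘ₗ map hC.str.toLinearMap ((curry θ).flip c ∘ₗ hC.str.toLinearMap))
          (TensorProduct.assoc k M C C
            (map dM.coact hC.str.symm.toLinearMap x)))) := by
  induction x with
  | zero => simp
  | add x y hx hy => simp only [add_tmul, map_add, hx, hy]
  | tmul m d =>
    rw [integralAct_tmul, dM.coact_act, dM.coact_str, map_tmul]
    congr 2
    induction dM.coact m with
    | zero => simp
    | add x y hx hy => simp only [add_tmul, map_add, hx, hy]
    | tmul n e => simp

theorem nuMap_str_symm_tmul (θ : C ⊗[k] C →ₗ[k] A) (dM : DoiMod hA hC M) (m : M) (c : C) :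
    nuMap θ dM (dM.str.symm m ⊗ₜ[k] hC.str c) =
      integralAct θ dM
        (map dM.str.symm.toLinearMap hC.str.symm.toLinearMap (dM.coact m) ⊗ₜ[k] c) := by
  simp [nuMap_apply, dM.coact_str_symm]

theorem map_nuMap_Gcoact_tmul (θ : C ⊗[k] C →ₗ[k] A) (dM : DoiMod hA hC M) (m : M) (c : C) :
    map (nuMap θ dM) LinearMap.id (Gcoact hC.toHomCoalg dM.str (m ⊗ₜ[k] hC.str c)) =
      map (curry (integralAct θ dM)
          (map dM.str.symm.toLinearMap hC.str.symm.toLinearMap (dM.coact m)))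
        (hC.str.toLinearMap ∘ₗ hC.str.toLinearMap) (hC.comul c) := by
  rw [Gcoact_apply, map_tmul, hC.comul_str]
  induction hC.comul c with
  | zero => simp
  | add x y hx hy => simp only [tmul_add, map_add, hx, hy]
  | tmul d e => simp [nuMap_str_symm_tmul]

theorem coact_nuMap (θi : NIntegral hA hC) (dM : DoiMod hA hC M) (x : M ⊗[k] C) :
    dM.coact (nuMap θi.θ dM x) =
      map (nuMap θi.θ dM) LinearMap.id (Gcoact hC.toHomCoalg dM.str x) := by
  induction x with
  | zero => simp
  | add x y hx hy => simp only [map_add, hx, hy]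
  | tmul m c =>
    obtain ⟨c, rfl⟩ := hC.str.surjective c
    rw [map_nuMap_Gcoact_tmul, nuMap_apply, map_tmul, LinearEquiv.coe_coe,
      LinearEquiv.symm_apply_apply, coact_integralAct_tmul, dM.hom_coassoc]
    induction dM.coact m with
    | zero => simp
    | add x y hx hy => simp only [map_add, map_add_left, LinearMap.add_apply, hx, hy]
    | tmul n d =>
      have act_θ : curry (integralAct θi.θ dM) (dM.str.symm n ⊗ₜ[k] hC.str.symm d) =
          dM.act n ∘ₗ curry θi.θ (hC.str.symm d) := by
        ext e
        simp [integralAct_tmul]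
      simp only [map_tmul, map_lift_assoc_symm_tmul, LinearMap.comp_apply, LinearEquiv.coe_coe,
        LinearEquiv.apply_symm_apply, θi.entwining_comul, map_map, act_θ, LinearMap.id_comp]

theorem nuMap_coact (θi : NIntegral hA hC) (dN : DoiMod hA hC N) (n : N) :
    nuMap θi.θ dN (dN.coact n) = n := by
  have normalized : lift dN.act ∘ₗ map LinearMap.id (θi.θ ∘ₗ hC.comul) =
      dN.str.toLinearMap ∘ₗ (TensorProduct.rid k N).toLinearMap ∘ₗ
        map LinearMap.id hC.counit := by
    ext m c
    simp [θi.cond2, dN.act_one]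
  calc
    _ = lift dN.act (map dN.str.toLinearMap θi.θ
          (map dN.str.symm.toLinearMap hC.comul (dN.coact n))) := by
      rw [← dN.hom_coassoc]
      rfl
    _ = lift dN.act (map LinearMap.id (θi.θ ∘ₗ hC.comul) (dN.coact n)) := by
      rw [map_map, LinearEquiv.comp_symm]
    _ = dN.str (TensorProduct.rid k N (map LinearMap.id hC.counit (dN.coact n))) :=
      LinearMap.congr_fun normalized _
    _ = n := by rw [dN.counit_coact, LinearEquiv.apply_symm_apply]

theorem IsDoiHom.map_nuMap {dM : DoiMod hA hC M} {dN : DoiMod hA hC N} {f : M →ₗ[k] N}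
    (hf : IsDoiHom dM dN f) (θ : C ⊗[k] C →ₗ[k] A) (x : M ⊗[k] C) :
    f (nuMap θ dM x) = nuMap θ dN (map f LinearMap.id x) := by
  have map_integralAct :
      f ∘ₗ integralAct θ dM = integralAct θ dN ∘ₗ map (map f LinearMap.id) LinearMap.id := by
    ext m d c
    simp [integralAct_tmul, hf.act_comm, hf.str_comm]
  have coact_comm : dN.coact ∘ₗ f = map f LinearMap.id ∘ₗ dM.coact := LinearMap.ext hf.coact_comm
  calc
    _ = integralAct θ dN (map (map f LinearMap.id) LinearMap.id
          (map dM.coact hC.str.symm.toLinearMap x)) := LinearMap.congr_fun map_integralAct _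
    _ = _ := by
      simp only [nuMap_apply, map_map, coact_comm, LinearMap.id_comp, LinearMap.comp_id]

/-- The average `n ↦ ν_M(g(n₀) ⊗ n₁)` of a linear map `g : N → M` against `θ`, which replaces an
`A`-linear map by a morphism of Doi Hom-Hopf modules. -/
noncomputable def average (θ : C ⊗[k] C →ₗ[k] A) (dM : DoiMod hA hC M) (dN : DoiMod hA hC N)
    (g : N →ₗ[k] M) : N →ₗ[k] M :=
  nuMap θ dM ∘ₗ map g LinearMap.id ∘ₗ dN.coact

theorem average_apply (θ : C ⊗[k] C →ₗ[k] A) (dM : DoiMod hA hC M) (dN : DoiMod hA hC N)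
    (g : N →ₗ[k] M) (n : N) :
    average θ dM dN g n = nuMap θ dM (map g LinearMap.id (dN.coact n)) := rfl

theorem average_act (θi : NIntegral hA hC) {dM : DoiMod hA hC M} {dN : DoiMod hA hC N}
    {g : N →ₗ[k] M} (hg : ∀ n a, g (dN.act n a) = dM.act (g n) a) (n : N) (a : A) :
    average θi.θ dM dN g (dN.act n a) = dM.act (average θi.θ dM dN g n) a := by
  have coact_act : dN.coact (dN.act n a) = Gact hA hC dN.act (dN.coact n) a := dN.compat n a
  rw [average_apply, coact_act, Gact_map hg, nuMap_Gact, average_apply]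

theorem coact_average (θi : NIntegral hA hC) {dM : DoiMod hA hC M} {dN : DoiMod hA hC N}
    {g : N →ₗ[k] M} (hg : ∀ n, g (dN.str n) = dM.str (g n)) (n : N) :
    dM.coact (average θi.θ dM dN g n) =
      map (average θi.θ dM dN g) LinearMap.id (dN.coact n) := by
  rw [average_apply, coact_nuMap, Gcoact_map _ hg, dN.Gcoact_coact, map_map, map_map]
  simp only [LinearMap.id_comp, LinearMap.comp_assoc, average]

theorem isDoiHom_average (θi : NIntegral hA hC) {dM : DoiMod hA hC M} {dN : DoiMod hA hC N}
    {g : N →ₗ[k] M} (hg : ∀ n a, g (dN.act n a) = dM.act (g n) a) :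
    IsDoiHom dN dM (average θi.θ dM dN g) where
  str_comm := map_str_of_map_act (average_act θi hg)
  act_comm := average_act θi hg
  coact_comm := coact_average θi (map_str_of_map_act hg)

theorem map_average_of_rightInverse (θi : NIntegral hA hC) {dM : DoiMod hA hC M}
    {dN : DoiMod hA hC N} {f : M →ₗ[k] N} (hf : IsDoiHom dM dN f) {g : N →ₗ[k] M}
    (hfg : ∀ n, f (g n) = n) (n : N) : f (average θi.θ dM dN g n) = n := by
  have comp_eq_id : f ∘ₗ g = LinearMap.id := LinearMap.ext hfg
  rw [average_apply, hf.map_nuMap, map_map, comp_eq_id, LinearMap.id_comp, map_id,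
    LinearMap.id_apply, nuMap_coact]

end Integral

end DoiHomHopf

theorem maschke_epi_general {k : Type*} [CommRing k] {H A C M N : Type*}
    [AddCommGroup H] [Module k H] [AddCommGroup A] [Module k A]
    [AddCommGroup C] [Module k C] [AddCommGroup M] [Module k M] [AddCommGroup N] [Module k N]
    {hH : HomBialg k H} {hA : HomComodAlg hH A} {hC : HomModCoalg hH C}
    (θi : NIntegral hA hC) {dM : DoiMod hA hC M} {dN : DoiMod hA hC N}
    {f : M →ₗ[k] N} (hf : IsDoiHom dM dN f) {g : N →ₗ[k] M}
    (hg_act : ∀ (n : N) (a : A), g (dN.act n a) = dM.act (g n) a)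
    (hfg : ∀ n : N, f (g n) = n) :
    ∃ g' : N →ₗ[k] M, IsDoiHom dN dM g' ∧ ∀ n : N, f (g' n) = n :=
  ⟨average θi.θ dM dN g, isDoiHom_average θi hg_act, map_average_of_rightInverse θi hf hfg⟩

/-- Maschke, surjective case: if a morphism `f` of Doi Hom-Hopf modules admits
a right inverse as a morphism of right `(A, β)`-Hom-modules, then it admits a right inverse
in the category of Doi Hom-Hopf modules. -/
theorem maschke_epi {k : Type*} [CommRing k] {H A C M N : Type*}
    [AddCommGroup H] [Module k H] [AddCommGroup A] [Module k A]
    [AddCommGroup C] [Module k C] [AddCommGroup M] [Module k M] [AddCommGroup N] [Module k N]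
    (hH : HomHopf k H) (hA : HomComodAlg hH.toHomBialg A) (hC : HomModCoalg hH.toHomBialg C)
    (θi : NIntegral hA hC) (dM : DoiMod hA hC M) (dN : DoiMod hA hC N)
    (f : M →ₗ[k] N) (hf : IsDoiHom dM dN f)
    (g : N →ₗ[k] M)
    (hg_str : ∀ n, g (dN.str n) = dM.str (g n))
    (hg_act : ∀ (n : N) (a : A), g (dN.act n a) = dM.act (g n) a)
    (hfg : ∀ n : N, f (g n) = n) :
    ∃ g' : N →ₗ[k] M, IsDoiHom dN dM g' ∧ ∀ n : N, f (g' n) = n :=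
  maschke_epi_general θi hf hg_act hfg
end

section
/- Let (H, α) be a monoidal Hom-Hopf algebra over k and let (M, μ) be simultaneously a right (H,α)-Hom-module (action m·h) and a right (H,α)-Hom-comodule (coaction ρ(m) = m₀⊗m₁). Then the Hom-Yetter-Drinfeld compatibility condition m₀·h₁ ⊗ m₁h₂ = μ((μ⁻¹(m)·h₂)₀) ⊗ h₁(μ⁻¹(m)·h₂)₁ (for all h ∈ H, m ∈ M) holds if and only if ρ(m·h) = m₀·α((h₂)₁) ⊗ S(h₁)(α⁻¹(m₁)(h₂)₂) (for all h ∈ H, m ∈ M). -/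
open TensorProduct

open DoiHomHopf

/-!
A Hom-algebra `A` multiplies the right leg of `M ⊗ A`, so a map `T : C → A` acts on families
`F : M → Hom(C, M ⊗ A)` by the twisted convolution
`(T ⋆ F)(m)(c) = μ(F(μ⁻¹(m))(c₂)₀) ⊗ T(c₁) F(μ⁻¹(m))(c₂)₁`.
If `T` and `T'` are convolution inverse and intertwine the structure maps, then
`T ⋆ (T' ⋆ F) = F` for every `F` compatible with the structure maps: Hom-associativity and
Hom-coassociativity shift the arguments by two powers of the structure maps, and compatibility
absorbs the shift.

For `F(m)(h) = ρ(m · h)` and `G(m)(h) = m₀ · h₁ ⊗ m₁h₂` the two conditions of the theorem read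
`G = id ⋆ F` and `F = S ⋆ G`, and `S` is the convolution inverse of `id`.
-/

namespace DoiHomHopf

section Convolution

variable {k : Type*} [CommRing k] {A C M N : Type*}
  [AddCommGroup A] [Module k A] [AddCommGroup C] [Module k C]
  [AddCommGroup M] [Module k M] [AddCommGroup N] [Module k N]

/-- Left multiplication on the right leg of `M ⊗ A`: `a ↦ (m ⊗ b ↦ m ⊗ ab)`. -/
noncomputable def HomAlg.lTensorMul (hA : HomAlg k A) (M : Type*) [AddCommGroup M] [Module k M] :
    A →ₗ[k] M ⊗[k] A →ₗ[k] M ⊗[k] A :=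
  LinearMap.lTensorHom M ∘ₗ hA.mul

@[simp]
theorem HomAlg.lTensorMul_tmul (hA : HomAlg k A) (a b : A) (m : M) :
    hA.lTensorMul M a (m ⊗ₜ[k] b) = m ⊗ₜ[k] hA.mul a b :=
  rfl

theorem HomAlg.lTensorMul_one (hA : HomAlg k A) :
    hA.lTensorMul M hA.one = hA.str.toLinearMap.lTensor M := by
  ext m b
  simp [hA.one_mul]

theorem HomAlg.lTensorMul_str_lTensorMul (hA : HomAlg k A) (a b : A) (x : M ⊗[k] A) :
    hA.lTensorMul M (hA.str a) (hA.lTensorMul M b x) =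
      hA.lTensorMul M (hA.mul a b) (hA.str.toLinearMap.lTensor M x) := by
  induction x with
  | zero => simp
  | tmul m c => simp [hA.hom_assoc]
  | add x y hx hy => simp only [map_add, hx, hy]

theorem HomAlg.lTensorMul_rTensor (hA : HomAlg k A) (a : A) (g : M →ₗ[k] N) (x : M ⊗[k] A) :
    hA.lTensorMul N a (g.rTensor A x) = g.rTensor A (hA.lTensorMul M a x) := by
  induction x with
  | zero => simp
  | tmul m b => simp
  | add x y hx hy => simp only [map_add, hx, hy]

/-- The convolution `c ↦ f(c₂)₀ ⊗ T(c₁) f(c₂)₁` of `T : C → A` with `f : C → M ⊗ A`, where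
`f(c)₀ ⊗ f(c)₁` denotes `f(c)`. -/
noncomputable def homConv (hA : HomAlg k A) (hC : HomCoalg k C) (T : C →ₗ[k] A)
    (f : C →ₗ[k] M ⊗[k] A) : C →ₗ[k] M ⊗[k] A :=
  TensorProduct.lift (hA.lTensorMul M) ∘ₗ TensorProduct.map T f ∘ₗ hC.comul

/-- `T'` is a right inverse of `T` for the convolution product of linear maps `C → A`, whose unit is
`c ↦ ε(c)1`. -/
def IsConvRightInverse (hA : HomAlg k A) (hC : HomCoalg k C) (T T' : C →ₗ[k] A) : Prop :=
  ∀ c, TensorProduct.lift hA.mul (TensorProduct.map T T' (hC.comul c)) = hC.counit c • hA.one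

variable {hA : HomAlg k A} {hC : HomCoalg k C} {T T' : C →ₗ[k] A}

theorem homConv_rTensor_comp (g : M →ₗ[k] N) (f : C →ₗ[k] M ⊗[k] A) :
    homConv hA hC T (g.rTensor A ∘ₗ f) = g.rTensor A ∘ₗ homConv hA hC T f := by
  have lift_comp_map :
      TensorProduct.lift (hA.lTensorMul N) ∘ₗ TensorProduct.map T (g.rTensor A ∘ₗ f) =
        g.rTensor A ∘ₗ TensorProduct.lift (hA.lTensorMul M) ∘ₗ TensorProduct.map T f :=
    TensorProduct.ext' fun a b => by simp [HomAlg.lTensorMul_rTensor]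
  simp only [homConv, ← LinearMap.comp_assoc, lift_comp_map]

theorem homConv_homConv_eq_lift (hT : ∀ c, T (hC.str c) = hA.str (T c)) (f : C →ₗ[k] M ⊗[k] A)
    (c : C) :
    homConv hA hC T (homConv hA hC T' f) c =
      TensorProduct.lift (hA.lTensorMul M)
        (TensorProduct.map (TensorProduct.lift hA.mul ∘ₗ TensorProduct.map T T' ∘ₗ hC.comul)
          (hA.str.toLinearMap.lTensor M ∘ₗ f ∘ₗ hC.str.symm.toLinearMap) (hC.comul c)) := by
  let iteratedMul : C ⊗[k] (C ⊗[k] C) →ₗ[k] M ⊗[k] A :=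
    TensorProduct.lift (hA.lTensorMul M) ∘ₗ TensorProduct.map (T ∘ₗ hC.str.toLinearMap)
      (TensorProduct.lift (hA.lTensorMul M) ∘ₗ TensorProduct.map T' f)
  have iteratedMul_map : iteratedMul ∘ₗ TensorProduct.map hC.str.symm.toLinearMap hC.comul =
      TensorProduct.lift (hA.lTensorMul M) ∘ₗ TensorProduct.map T (homConv hA hC T' f) :=
    TensorProduct.ext' fun a b => by simp [iteratedMul, homConv]
  have iteratedMul_assoc : iteratedMul ∘ₗ (TensorProduct.assoc k C C C).toLinearMap =
      TensorProduct.lift (hA.lTensorMul M) ∘ₗ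
        TensorProduct.map (TensorProduct.lift hA.mul ∘ₗ TensorProduct.map T T')
          (hA.str.toLinearMap.lTensor M ∘ₗ f) :=
    TensorProduct.ext_threefold fun a b d => by
      simp [iteratedMul, hT, HomAlg.lTensorMul_str_lTensorMul]
  calc homConv hA hC T (homConv hA hC T' f) c
      = iteratedMul (TensorProduct.map hC.str.symm.toLinearMap hC.comul (hC.comul c)) :=
        (LinearMap.congr_fun iteratedMul_map (hC.comul c)).symm
    _ = iteratedMul (TensorProduct.assoc k C C C
          (TensorProduct.map hC.comul hC.str.symm.toLinearMap (hC.comul c))) := by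
        rw [hC.hom_coassoc]
    _ = TensorProduct.lift (hA.lTensorMul M)
          (TensorProduct.map (TensorProduct.lift hA.mul ∘ₗ TensorProduct.map T T')
            (hA.str.toLinearMap.lTensor M ∘ₗ f)
            (TensorProduct.map hC.comul hC.str.symm.toLinearMap (hC.comul c))) :=
        LinearMap.congr_fun iteratedMul_assoc _
    _ = _ := by
        rw [TensorProduct.map_map, LinearMap.comp_assoc, LinearMap.comp_assoc]

theorem IsConvRightInverse.homConv_homConv_apply (hTT' : IsConvRightInverse hA hC T T')
    (hT : ∀ c, T (hC.str c) = hA.str (T c)) (f : C →ₗ[k] M ⊗[k] A) (c : C) :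
    homConv hA hC T (homConv hA hC T' f) c =
      hA.str.toLinearMap.lTensor M (hA.str.toLinearMap.lTensor M
        (f (hC.str.symm (hC.str.symm c)))) := by
  have conv_eq : TensorProduct.lift hA.mul ∘ₗ TensorProduct.map T T' ∘ₗ hC.comul =
      hC.counit.smulRight hA.one :=
    LinearMap.ext hTT'
  rw [homConv_homConv_eq_lift hT, conv_eq, ← hC.counit_comul_left c]
  induction hC.comul c with
  | zero => simp
  | tmul a b => simp [HomAlg.lTensorMul_one]
  | add x y hx hy => simp only [map_add, hx, hy]

/-- A family `F : M → Hom(C, M ⊗ A)` is compatible with the structure maps if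
`F(μ(m))(γ(c)) = (μ ⊗ β)(F(m)(c))`. -/
def IsStrEquivariant (hA : HomAlg k A) (hC : HomCoalg k C) (μ : M ≃ₗ[k] M)
    (F : M → C →ₗ[k] M ⊗[k] A) : Prop :=
  ∀ m c, F (μ m) (hC.str c) = TensorProduct.map μ.toLinearMap hA.str.toLinearMap (F m c)

/-- The twisted convolution `(T ⋆ F)(m)(c) = μ(F(μ⁻¹(m))(c₂)₀) ⊗ T(c₁) F(μ⁻¹(m))(c₂)₁` of
`T : C → A` with a family `F : M → Hom(C, M ⊗ A)`. -/
noncomputable def twistedConv (hA : HomAlg k A) (hC : HomCoalg k C) (μ : M ≃ₗ[k] M)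
    (T : C →ₗ[k] A) (F : M → C →ₗ[k] M ⊗[k] A) (m : M) : C →ₗ[k] M ⊗[k] A :=
  μ.toLinearMap.rTensor A ∘ₗ homConv hA hC T (F (μ.symm m))

variable {μ : M ≃ₗ[k] M} {F G : M → C →ₗ[k] M ⊗[k] A}

theorem IsStrEquivariant.twistedConv_twistedConv (hF : IsStrEquivariant hA hC μ F)
    (hT : ∀ c, T (hC.str c) = hA.str (T c)) (hTT' : IsConvRightInverse hA hC T T') :
    twistedConv hA hC μ T (twistedConv hA hC μ T' F) = F := by
  funext m
  ext c
  obtain ⟨n, rfl⟩ := (μ.trans μ).surjective m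
  obtain ⟨d, rfl⟩ := (hC.str.trans hC.str).surjective c
  simp only [twistedConv, homConv_rTensor_comp, LinearMap.comp_apply,
    hTT'.homConv_homConv_apply hT, LinearEquiv.trans_apply, LinearEquiv.symm_apply_apply, hF _ _]
  simp only [LinearMap.lTensor, LinearMap.rTensor, TensorProduct.map_map, LinearMap.id_comp,
    LinearMap.comp_id]

theorem eq_twistedConv_iff (hT : ∀ c, T (hC.str c) = hA.str (T c))
    (hT' : ∀ c, T' (hC.str c) = hA.str (T' c)) (hTT' : IsConvRightInverse hA hC T T')
    (hT'T : IsConvRightInverse hA hC T' T) (hF : IsStrEquivariant hA hC μ F)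
    (hG : IsStrEquivariant hA hC μ G) :
    G = twistedConv hA hC μ T F ↔ F = twistedConv hA hC μ T' G := by
  constructor
  · rintro rfl
    exact (hF.twistedConv_twistedConv hT' hT'T).symm
  · rintro rfl
    exact (hG.twistedConv_twistedConv hT hTT').symm

end Convolution

section YetterDrinfeld

variable {k : Type*} [CommRing k] {H M : Type*}
  [AddCommGroup H] [Module k H] [AddCommGroup M] [Module k M]
  {hA : HomAlg k H} {hC : HomCoalg k H} {μ : M ≃ₗ[k] M}
  {act : M →ₗ[k] H →ₗ[k] M} {coact : M →ₗ[k] M ⊗[k] H}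

/-- The diagonal action `(m ⊗ g) · h = m · h₁ ⊗ gh₂` of `H` on `M ⊗ H`. -/
noncomputable def diagonalAct (hA : HomAlg k H) (hC : HomCoalg k H)
    (act : M →ₗ[k] H →ₗ[k] M) (x : M ⊗[k] H) : H →ₗ[k] M ⊗[k] H :=
  TensorProduct.map₂ act hA.mul x ∘ₗ hC.comul

theorem diagonalAct_map_str (hstr : hA.str = hC.str)
    (str_act : ∀ m h, μ (act m h) = act (μ m) (hA.str h)) (x : M ⊗[k] H) (h : H) :
    diagonalAct hA hC act (TensorProduct.map μ.toLinearMap hA.str.toLinearMap x) (hC.str h) =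
      TensorProduct.map μ.toLinearMap hA.str.toLinearMap (diagonalAct hA hC act x h) := by
  have comul_str : hC.comul (hC.str h) =
      TensorProduct.map hA.str.toLinearMap hA.str.toLinearMap (hC.comul h) := by
    rw [hstr, hC.comul_str]
  simp only [diagonalAct, LinearMap.comp_apply, comul_str]
  induction hC.comul h with
  | zero => simp
  | tmul a b =>
    induction x with
    | zero => simp
    | tmul m c => simp [hA.str_mul, str_act]
    | add x y hx hy => simp only [map_add, hx, hy, LinearMap.add_apply]
  | add x y hx hy => simp only [map_add, hx, hy]

theorem isStrEquivariant_diagonalAct_coact (hstr : hA.str = hC.str)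
    (str_act : ∀ m h, μ (act m h) = act (μ m) (hA.str h))
    (coact_str : ∀ m, coact (μ m) =
      TensorProduct.map μ.toLinearMap hA.str.toLinearMap (coact m)) :
    IsStrEquivariant hA hC μ fun m => diagonalAct hA hC act (coact m) := fun m h => by
  simp only [coact_str, diagonalAct_map_str hstr str_act]

theorem isStrEquivariant_coact_act (hstr : hA.str = hC.str)
    (str_act : ∀ m h, μ (act m h) = act (μ m) (hA.str h))
    (coact_str : ∀ m, coact (μ m) =
      TensorProduct.map μ.toLinearMap hA.str.toLinearMap (coact m)) :
    IsStrEquivariant hA hC μ fun m => coact ∘ₗ act m := fun m h => by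
  simp only [LinearMap.comp_apply, ← hstr, ← str_act, coact_str]

theorem twistedConv_id_apply (F : M → H →ₗ[k] M ⊗[k] H) (m : M) (h : H) :
    twistedConv hA hC μ LinearMap.id F m h =
      TensorProduct.map μ.toLinearMap (TensorProduct.lift hA.mul)
        ((TensorProduct.assoc k M H H)
          (TensorProduct.map (TensorProduct.comm k H M).toLinearMap LinearMap.id
            ((TensorProduct.assoc k H M H).symm
              (TensorProduct.map LinearMap.id (F (μ.symm m)) (hC.comul h))))) := by
  simp only [twistedConv, homConv, LinearMap.comp_apply]
  induction hC.comul h with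
  | zero => simp
  | tmul a b =>
    simp only [TensorProduct.map_tmul, TensorProduct.lift.tmul, LinearMap.id_apply]
    induction F (μ.symm m) b with
    | zero => simp
    | tmul m c => simp
    | add x y hx hy => simp only [map_add, hx, hy, TensorProduct.tmul_add]
  | add x y hx hy => simp only [map_add, hx, hy]

/-- The expression `m₀ · α((h₂)₁) ⊗ T(h₁)(α⁻¹(m₁)(h₂)₂)` for `x = m₀ ⊗ m₁`. With `T` the antipode
and `x = ρ(m)` it is the second Yetter-Drinfeld formula for `ρ(m · h)`. -/
noncomputable def sandwichAct (hA : HomAlg k H) (hC : HomCoalg k H) (T : H →ₗ[k] H)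
    (act : M →ₗ[k] H →ₗ[k] M) (x : M ⊗[k] H) (h : H) : M ⊗[k] H :=
  (TensorProduct.map LinearMap.id (TensorProduct.lift hA.mul) ∘ₗ
    (TensorProduct.assoc k M H H).toLinearMap ∘ₗ
    TensorProduct.map
      (TensorProduct.map (TensorProduct.lift (act.compl₂ hA.str.toLinearMap)) T ∘ₗ
        (TensorProduct.assoc k M H H).symm.toLinearMap ∘ₗ
        TensorProduct.map LinearMap.id (TensorProduct.comm k H H).toLinearMap)
      (TensorProduct.lift (hA.mul ∘ₗ hA.str.symm.toLinearMap)) ∘ₗ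
    (TensorProduct.tensorTensorTensorComm k M H (H ⊗[k] H) H).toLinearMap)
    (x ⊗ₜ[k] ((TensorProduct.assoc k H H H).symm
      (TensorProduct.map LinearMap.id hC.comul (hC.comul h))))

theorem sandwichAct_map_str (str_act : ∀ m h, μ (act m h) = act (μ m) (hA.str h))
    (T : H →ₗ[k] H) (x : M ⊗[k] H) (h : H) :
    sandwichAct hA hC T act (TensorProduct.map μ.toLinearMap hA.str.toLinearMap x) h =
      μ.toLinearMap.rTensor H (homConv hA hC T (diagonalAct hA hC act x) h) := by
  simp only [sandwichAct, homConv, LinearMap.comp_apply]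
  induction hC.comul h with
  | zero => simp
  | tmul a b =>
    simp only [TensorProduct.map_tmul, TensorProduct.lift.tmul, LinearMap.id_apply,
      diagonalAct, LinearMap.comp_apply]
    induction hC.comul b with
    | zero => simp
    | tmul c d =>
      induction x with
      | zero => simp
      | tmul m e => simp [str_act]
      | add x y hx hy =>
        simp only [map_add, hx, hy, TensorProduct.add_tmul, LinearMap.add_apply]
    | add x y hx hy => simp only [map_add, hx, hy, TensorProduct.tmul_add]
  | add x y hx hy => simp only [map_add, hx, hy, TensorProduct.tmul_add]

theorem sandwichAct_coact (str_act : ∀ m h, μ (act m h) = act (μ m) (hA.str h))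
    (coact_str : ∀ m, coact (μ m) =
      TensorProduct.map μ.toLinearMap hA.str.toLinearMap (coact m))
    (T : H →ₗ[k] H) (m : M) (h : H) :
    sandwichAct hA hC T act (coact m) h =
      twistedConv hA hC μ T (fun m => diagonalAct hA hC act (coact m)) m h := by
  obtain ⟨n, rfl⟩ := μ.surjective m
  rw [coact_str, sandwichAct_map_str str_act]
  simp [twistedConv]

end YetterDrinfeld

end DoiHomHopf

theorem hYD_conditions_equiv_general {k : Type*} [CommRing k] {H M : Type*}
    [AddCommGroup H] [Module k H] [AddCommGroup M] [Module k M]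
    (hA : HomAlg k H) (hC : HomCoalg k H) (hstr : hA.str = hC.str) (S : H →ₗ[k] H)
    (S_mul_comul : ∀ h, TensorProduct.lift hA.mul
      (TensorProduct.map S LinearMap.id (hC.comul h)) = hC.counit h • hA.one)
    (mul_S_comul : ∀ h, TensorProduct.lift hA.mul
      (TensorProduct.map LinearMap.id S (hC.comul h)) = hC.counit h • hA.one)
    (S_str : ∀ h, S (hA.str h) = hA.str (S h))
    (μ : M ≃ₗ[k] M) (act : M →ₗ[k] H →ₗ[k] M) (coact : M →ₗ[k] M ⊗[k] H)
    (str_act : ∀ m h, μ (act m h) = act (μ m) (hA.str h))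
    (coact_str : ∀ m, coact (μ m) =
      TensorProduct.map μ.toLinearMap hA.str.toLinearMap (coact m)) :
    (∀ (m : M) (h : H),
        TensorProduct.map₂ act hA.mul (coact m) (hC.comul h) =
          TensorProduct.map μ.toLinearMap (TensorProduct.lift hA.mul)
            ((TensorProduct.assoc k M H H)
              (TensorProduct.map (TensorProduct.comm k H M).toLinearMap LinearMap.id
                ((TensorProduct.assoc k H M H).symm
                  (TensorProduct.map LinearMap.id (coact ∘ₗ act (μ.symm m))
                    (hC.comul h)))))) ↔
    (∀ (m : M) (h : H), coact (act m h) = sandwichAct hA hC S act (coact m) h) := by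
  let F : M → H →ₗ[k] M ⊗[k] H := fun m => coact ∘ₗ act m
  let G : M → H →ₗ[k] M ⊗[k] H := fun m => diagonalAct hA hC act (coact m)
  calc
    _ ↔ G = twistedConv hA hC μ LinearMap.id F := by
      simp only [funext_iff, LinearMap.ext_iff, twistedConv_id_apply]
      rfl
    _ ↔ F = twistedConv hA hC μ S G :=
      eq_twistedConv_iff (fun _ => by rw [← hstr]; rfl) (fun _ => by rw [← hstr, S_str])
        mul_S_comul S_mul_comul (isStrEquivariant_coact_act hstr str_act coact_str)
        (isStrEquivariant_diagonalAct_coact hstr str_act coact_str)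
    _ ↔ _ := by
      simp only [funext_iff, LinearMap.ext_iff, sandwichAct_coact str_act coact_str]
      rfl

/-- For `(M, μ)` simultaneously a right `(H, α)`-Hom-module and a right
`(H, α)`-Hom-comodule, the Hom-Yetter-Drinfeld compatibility condition
`m₀ · h₁ ⊗ m₁h₂ = μ((μ⁻¹(m) · h₂)₀) ⊗ h₁(μ⁻¹(m) · h₂)₁` holds iff
`ρ(m · h) = m₀ · α((h₂)₁) ⊗ S(h₁)(α⁻¹(m₁)(h₂)₂)` holds. -/
theorem hYD_conditions_equiv {k : Type*} [CommRing k] {H M : Type*}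
    [AddCommGroup H] [Module k H] [AddCommGroup M] [Module k M]
    (hH : HomHopf k H)
    (mM : HomMod hH.toHomBialg.toHomAlg M) (cM : HomComod hH.toHomBialg.toHomCoalg M)
    (hstr : mM.str = cM.str) :
    (∀ (m : M) (h : H),
        TensorProduct.map₂ mM.act hH.mul (cM.coact m) (hH.comul h) =
          TensorProduct.map mM.str.toLinearMap (TensorProduct.lift hH.mul)
            ((TensorProduct.assoc k M H H)
              (TensorProduct.map (TensorProduct.comm k H M).toLinearMap LinearMap.id
                ((TensorProduct.assoc k H M H).symm
                  (TensorProduct.map LinearMap.id (cM.coact ∘ₗ mM.act (mM.str.symm m))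
                    (hH.comul h)))))) ↔
    (∀ (m : M) (h : H),
        cM.coact (mM.act m h) =
          (TensorProduct.map LinearMap.id (TensorProduct.lift hH.mul) ∘ₗ
            (TensorProduct.assoc k M H H).toLinearMap ∘ₗ
            TensorProduct.map
              (TensorProduct.map (TensorProduct.lift (mM.act.compl₂ hH.str.toLinearMap)) hH.S ∘ₗ
                (TensorProduct.assoc k M H H).symm.toLinearMap ∘ₗ
                TensorProduct.map LinearMap.id (TensorProduct.comm k H H).toLinearMap)
              (TensorProduct.lift (hH.mul ∘ₗ hH.str.symm.toLinearMap)) ∘ₗ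
            (TensorProduct.tensorTensorTensorComm k M H (H ⊗[k] H) H).toLinearMap)
            ((cM.coact m) ⊗ₜ[k]
              ((TensorProduct.assoc k H H H).symm
                (TensorProduct.map LinearMap.id hH.comul (hH.comul h))))) := by
  exact hYD_conditions_equiv_general hH.toHomAlg hH.toHomCoalg rfl hH.S hH.S_mul_comul
    hH.mul_S_comul hH.S_str mM.str mM.act cM.coact mM.str_act (hstr ▸ cM.coact_str)
end

section
/- Let (H, α) be a monoidal Hom-Hopf algebra with bijective antipode S. Let H^op⊗H denote the k-module H⊗H with multiplication (h⊗k)(l⊗m) = hl ⊗ mk, unit 1_H⊗1_H, comultiplication (h⊗k) ↦ (h₁⊗k₁)⊗(h₂⊗k₂), counit (h⊗k) ↦ ε(h)ε(k), and invertible map α⊗α. Then: (a) H^op⊗H is a monoidal Hom-bialgebra (i.e. a monoidal Hom-algebra, a monoidal Hom-coalgebra, and its comultiplication and counit are multiplicative and unital); (b) H, with invertible map α and coaction ρ : H → H⊗(H^op⊗H) given by ρ(h) = α((h₂)₁) ⊗ ((h₂)₂ ⊗ S(α⁻¹(h₁))), is a right (H^op⊗H)-Hom-comodule; and (c) ρ(hg)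 = ρ(h)ρ(g) for the componentwise product on H⊗(H^op⊗H) and ρ(1_H) = 1_H⊗(1_H⊗1_H), so that H is a right H^op⊗H-Hom-comodule algebra. -/
open TensorProduct

open DoiHomHopf

/-- The multiplication of `H^op ⊗ H`: `(h ⊗ k)(l ⊗ m) = hl ⊗ mk`. -/
noncomputable def opMul {k : Type*} [CommRing k] {H : Type*} [AddCommGroup H] [Module k H]
    (hH : HomHopf k H) : (H ⊗[k] H) →ₗ[k] (H ⊗[k] H) →ₗ[k] (H ⊗[k] H) :=
  TensorProduct.map₂ hH.mul hH.mul.flip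

/-- The comultiplication of `H^op ⊗ H`: `(h ⊗ k) ↦ (h₁ ⊗ k₁) ⊗ (h₂ ⊗ k₂)`. -/
noncomputable def opComul {k : Type*} [CommRing k] {H : Type*} [AddCommGroup H] [Module k H]
    (hH : HomHopf k H) : (H ⊗[k] H) →ₗ[k] (H ⊗[k] H) ⊗[k] (H ⊗[k] H) :=
  (TensorProduct.tensorTensorTensorComm k H H H H).toLinearMap ∘ₗ
    TensorProduct.map hH.comul hH.comul

/-- The counit of `H^op ⊗ H`: `(h ⊗ k) ↦ ε(h)ε(k)`. -/
noncomputable def opCounit {k : Type*} [CommRing k] {H : Type*} [AddCommGroup H] [Module k H]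
    (hH : HomHopf k H) : (H ⊗[k] H) →ₗ[k] k :=
  (TensorProduct.lid k k).toLinearMap ∘ₗ TensorProduct.map hH.counit hH.counit

/-- The coaction of `H^op ⊗ H` on `H`: `h ↦ α((h₂)₁) ⊗ ((h₂)₂ ⊗ S(α⁻¹(h₁)))`. -/
noncomputable def opCoact {k : Type*} [CommRing k] {H : Type*} [AddCommGroup H] [Module k H]
    (hH : HomHopf k H) : H →ₗ[k] H ⊗[k] (H ⊗[k] H) :=
  TensorProduct.map hH.str.toLinearMap LinearMap.id ∘ₗ
    (TensorProduct.assoc k H H H).toLinearMap ∘ₗ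
    (TensorProduct.comm k H (H ⊗[k] H)).toLinearMap ∘ₗ
    TensorProduct.map (hH.S ∘ₗ hH.str.symm.toLinearMap) hH.comul ∘ₗ hH.comul

/-- The action of `H^op ⊗ H` on `H`: `c ◁ (h ⊗ k) = α(k)(α⁻¹(c)h)`. -/
noncomputable def opAct {k : Type*} [CommRing k] {H : Type*} [AddCommGroup H] [Module k H]
    (hH : HomHopf k H) : H →ₗ[k] (H ⊗[k] H) →ₗ[k] H :=
  TensorProduct.curry (TensorProduct.lift hH.mul.flip ∘ₗ
    TensorProduct.map (TensorProduct.lift (hH.mul ∘ₗ hH.str.symm.toLinearMap))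
      hH.str.toLinearMap ∘ₗ
    (TensorProduct.assoc k H H H).symm.toLinearMap)

/-!
Linear maps from a monoidal Hom-coalgebra to a monoidal Hom-algebra that commute with the structure
maps form a monoid under Hom-convolution, so a left and a right inverse of the same map agree. As in
the classical case, this yields `S(xy) = S(y)S(x)` and `Δ(S(h)) = S(h₂) ⊗ S(h₁)`. The first identity
makes `ρ(h) = α(h₂₁) ⊗ (h₂₂ ⊗ S(α⁻¹(h₁)))` multiplicative. With the second, both sides of the
coassociativity of `ρ` become the same map applied to `(h₁₁ ⊗ h₁₂) ⊗ (h₂₁ ⊗ (h₂₂₁ ⊗ h₂₂₂))`, because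
`Δ ∘ α` is coassociative without a twist.
-/

namespace DoiHomHopf

variable {k : Type*} [CommRing k] {A B C D M : Type*} [AddCommGroup A] [Module k A]
  [AddCommGroup B] [Module k B] [AddCommGroup C] [Module k C] [AddCommGroup D] [Module k D]
  [AddCommGroup M] [Module k M]

theorem assoc_comp_tensorTensorTensorComm :
    (TensorProduct.assoc k (A ⊗[k] B) (A ⊗[k] B) (A ⊗[k] B)).toLinearMap ∘ₗ
      map (tensorTensorTensorComm k A A B B).toLinearMap .id ∘ₗ
        (tensorTensorTensorComm k (A ⊗[k] A) A (B ⊗[k] B) B).toLinearMap =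
    (map .id (tensorTensorTensorComm k A A B B).toLinearMap ∘ₗ
      (tensorTensorTensorComm k A (A ⊗[k] A) B (B ⊗[k] B)).toLinearMap) ∘ₗ
        map (TensorProduct.assoc k A A A).toLinearMap
          (TensorProduct.assoc k B B B).toLinearMap := by
  ext
  simp

theorem map₂_flip_flip (f : A →ₗ[k] A →ₗ[k] A) (g : B →ₗ[k] B →ₗ[k] B) :
    map₂ f.flip g.flip = (map₂ f g).flip := by
  ext
  simp

theorem tensorTensorTensorComm_map₂ (f : A →ₗ[k] A →ₗ[k] A) (g : B →ₗ[k] B →ₗ[k] B)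
    (x x' : A ⊗[k] A) (y y' : B ⊗[k] B) :
    tensorTensorTensorComm k A A B B (map₂ f f x x' ⊗ₜ map₂ g g y y') =
      map₂ (map₂ f g) (map₂ f g) (tensorTensorTensorComm k A A B B (x ⊗ₜ y))
        (tensorTensorTensorComm k A A B B (x' ⊗ₜ y')) := by
  suffices (map₂ (map₂ f f) (map₂ g g)).compr₂ (tensorTensorTensorComm k A A B B).toLinearMap =
      (map₂ (map₂ f g) (map₂ f g)).compl₁₂ (tensorTensorTensorComm k A A B B).toLinearMap
        (tensorTensorTensorComm k A A B B).toLinearMap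
    from LinearMap.congr_fun₂ this (x ⊗ₜ y) (x' ⊗ₜ y')
  ext
  simp

namespace HomAlg

theorem str_symm_mul_s14 (hA : HomAlg k A) (a b : A) :
    hA.str.symm (hA.mul a b) = hA.mul (hA.str.symm a) (hA.str.symm b) := by
  rw [LinearEquiv.symm_apply_eq, hA.str_mul, LinearEquiv.apply_symm_apply,
    LinearEquiv.apply_symm_apply]

theorem str_symm_one (hA : HomAlg k A) : hA.str.symm hA.one = hA.one := by
  rw [LinearEquiv.symm_apply_eq, hA.str_one]

/-- The opposite monoidal Hom-algebra, on the same module. -/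
def op (hA : HomAlg k A) : HomAlg k A where
  str := hA.str
  mul := hA.mul.flip
  one := hA.one
  str_mul a b := hA.str_mul b a
  str_one := hA.str_one
  hom_assoc a b c := (hA.hom_assoc c b a).symm
  mul_one := hA.one_mul
  one_mul := hA.mul_one

/-- The tensor product of two monoidal Hom-algebras, with componentwise multiplication. -/
noncomputable def tensor (hA : HomAlg k A) (hB : HomAlg k B) : HomAlg k (A ⊗[k] B) where
  str := congr hA.str hB.str
  mul := map₂ hA.mul hB.mul
  one := hA.one ⊗ₜ hB.one
  str_mul x y := by
    suffices (map₂ hA.mul hB.mul).compr₂ (congr hA.str hB.str).toLinearMap =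
        (map₂ hA.mul hB.mul).compl₁₂ (congr hA.str hB.str).toLinearMap
          (congr hA.str hB.str).toLinearMap from LinearMap.congr_fun₂ this x y
    ext a b a' b'
    simp [hA.str_mul, hB.str_mul]
  str_one := by rw [congr_tmul, hA.str_one, hB.str_one]
  hom_assoc x y z := by
    induction x with
    | zero => simp
    | add x x' hx hx' => simp only [map_add, LinearMap.add_apply, hx, hx']
    | tmul a b =>
      induction y with
      | zero => simp
      | add y y' hy hy' => simp only [map_add, LinearMap.add_apply, hy, hy']
      | tmul a' b' =>
        induction z with
        | zero => simp
        | add z z' hz hz' => simp only [map_add, hz, hz']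
        | tmul a'' b'' => simp [hA.hom_assoc, hB.hom_assoc]
  mul_one x := by
    suffices (map₂ hA.mul hB.mul).flip (hA.one ⊗ₜ hB.one) = (congr hA.str hB.str).toLinearMap
      from LinearMap.congr_fun this x
    ext a b
    simp [hA.mul_one, hB.mul_one]
  one_mul x := by
    suffices map₂ hA.mul hB.mul (hA.one ⊗ₜ hB.one) = (congr hA.str hB.str).toLinearMap
      from LinearMap.congr_fun this x
    ext a b
    simp [hA.one_mul, hB.one_mul]

theorem mul_mul_mul_mul (hA : HomAlg k A) (a b c d : A) :
    hA.mul (hA.mul a b) (hA.mul c d) =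
      hA.mul (hA.mul a (hA.str.symm (hA.mul b c))) (hA.str d) := by
  obtain ⟨a, rfl⟩ := hA.str.surjective a
  obtain ⟨b, rfl⟩ := hA.str.surjective b
  obtain ⟨c, rfl⟩ := hA.str.surjective c
  rw [← hA.str_mul, ← hA.str_mul, hA.hom_assoc, LinearEquiv.symm_apply_apply, hA.hom_assoc]

theorem lift_mul_map_str (hA : HomAlg k A) (x : A ⊗[k] A) :
    lift hA.mul (map hA.str.toLinearMap hA.str.toLinearMap x) = hA.str (lift hA.mul x) := by
  suffices lift hA.mul ∘ₗ map hA.str.toLinearMap hA.str.toLinearMap =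
      hA.str.toLinearMap ∘ₗ lift hA.mul from LinearMap.congr_fun this x
  ext
  simp [hA.str_mul]

end HomAlg

namespace HomCoalg

theorem comul_str_symm (hC : HomCoalg k C) (c : C) :
    hC.comul (hC.str.symm c) =
      map hC.str.symm.toLinearMap hC.str.symm.toLinearMap (hC.comul c) := by
  obtain ⟨c, rfl⟩ := hC.str.surjective c
  rw [LinearEquiv.symm_apply_apply, hC.comul_str, map_map, LinearEquiv.symm_comp, map_id,
    LinearMap.id_apply]

theorem counit_str_symm (hC : HomCoalg k C) (c : C) :
    hC.counit (hC.str.symm c) = hC.counit c := by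
  rw [← hC.counit_str, LinearEquiv.apply_symm_apply]

/-- The comultiplication `c ⊗ d ↦ (c₁ ⊗ d₁) ⊗ (c₂ ⊗ d₂)` of the tensor product of two monoidal
Hom-coalgebras. -/
noncomputable def tensorComul (hC : HomCoalg k C) (hD : HomCoalg k D) :
    C ⊗[k] D →ₗ[k] (C ⊗[k] D) ⊗[k] (C ⊗[k] D) :=
  (tensorTensorTensorComm k C C D D).toLinearMap ∘ₗ map hC.comul hD.comul

/-- The counit `c ⊗ d ↦ ε(c)ε(d)` of the tensor product of two monoidal Hom-coalgebras. -/
noncomputable def tensorCounit (hC : HomCoalg k C) (hD : HomCoalg k D) : C ⊗[k] D →ₗ[k] k :=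
  (TensorProduct.lid k k).toLinearMap ∘ₗ map hC.counit hD.counit

variable (hC : HomCoalg k C) (hD : HomCoalg k D)

theorem tensorComul_tmul (c : C) (d : D) :
    hC.tensorComul hD (c ⊗ₜ d) = tensorTensorTensorComm k C C D D (hC.comul c ⊗ₜ hD.comul d) :=
  rfl

theorem tensorCounit_tmul (c : C) (d : D) :
    hC.tensorCounit hD (c ⊗ₜ d) = hC.counit c * hD.counit d :=
  rfl

theorem tensorComul_congr_str (x : C ⊗[k] D) :
    hC.tensorComul hD (congr hC.str hD.str x) =
      map (congr hC.str hD.str).toLinearMap (congr hC.str hD.str).toLinearMap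
        (hC.tensorComul hD x) := by
  induction x with
  | zero => simp
  | add x x' hx hx' => simp only [map_add, hx, hx']
  | tmul c d =>
    simpa [tensorComul_tmul, hC.comul_str, hD.comul_str] using
      LinearMap.congr_fun (tensorTensorTensorComm_comp_map k hC.str.toLinearMap
        hC.str.toLinearMap hD.str.toLinearMap hD.str.toLinearMap) (hC.comul c ⊗ₜ hD.comul d)

theorem tensorComul_hom_coassoc (x : C ⊗[k] D) :
    map (congr hC.str hD.str).symm.toLinearMap (hC.tensorComul hD) (hC.tensorComul hD x) =
      TensorProduct.assoc k _ _ _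
        (map (hC.tensorComul hD) (congr hC.str hD.str).symm.toLinearMap
          (hC.tensorComul hD x)) := by
  let shuffle : (C ⊗[k] (C ⊗[k] C)) ⊗[k] (D ⊗[k] (D ⊗[k] D)) →ₗ[k]
      (C ⊗[k] D) ⊗[k] ((C ⊗[k] D) ⊗[k] (C ⊗[k] D)) :=
    map .id (tensorTensorTensorComm k C C D D).toLinearMap ∘ₗ
      (tensorTensorTensorComm k C (C ⊗[k] C) D (D ⊗[k] D)).toLinearMap
  have shuffle_right : map (congr hC.str hD.str).symm.toLinearMap (hC.tensorComul hD) ∘ₗ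
      (tensorTensorTensorComm k C C D D).toLinearMap =
      shuffle ∘ₗ map (map hC.str.symm.toLinearMap hC.comul)
        (map hD.str.symm.toLinearMap hD.comul) := by
    ext
    simp [shuffle, tensorComul_tmul]
  have shuffle_left : (TensorProduct.assoc k _ _ _).toLinearMap ∘ₗ
      map (hC.tensorComul hD) (congr hC.str hD.str).symm.toLinearMap ∘ₗ
        (tensorTensorTensorComm k C C D D).toLinearMap =
      shuffle ∘ₗ map
        ((TensorProduct.assoc k C C C).toLinearMap ∘ₗ map hC.comul hC.str.symm.toLinearMap)
        ((TensorProduct.assoc k D D D).toLinearMap ∘ₗ map hD.comul hD.str.symm.toLinearMap) := by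
    rw [map_comp, ← LinearMap.comp_assoc _ _ shuffle, ← assoc_comp_tensorTensorTensorComm]
    ext
    simp [tensorComul_tmul]
  induction x with
  | zero => simp
  | add x x' hx hx' => simp only [map_add, hx, hx']
  | tmul c d =>
    refine (LinearMap.congr_fun shuffle_right (hC.comul c ⊗ₜ hD.comul d)).trans
      (Eq.trans ?_ (LinearMap.congr_fun shuffle_left (hC.comul c ⊗ₜ hD.comul d)).symm)
    simp [hC.hom_coassoc, hD.hom_coassoc]

theorem lid_map_tensorCounit_tensorComul (x : C ⊗[k] D) :
    TensorProduct.lid k _ (map (hC.tensorCounit hD) .id (hC.tensorComul hD x)) =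
      (congr hC.str hD.str).symm x := by
  have factor : (TensorProduct.lid k (C ⊗[k] D)).toLinearMap ∘ₗ
      map (hC.tensorCounit hD) .id ∘ₗ (tensorTensorTensorComm k C C D D).toLinearMap =
      map ((TensorProduct.lid k C).toLinearMap ∘ₗ map hC.counit .id)
        ((TensorProduct.lid k D).toLinearMap ∘ₗ map hD.counit .id) := by
    ext
    simp [tensorCounit_tmul, smul_tmul', smul_smul, mul_comm]
  induction x with
  | zero => simp
  | add x x' hx hx' => simp only [map_add, hx, hx']
  | tmul c d =>
    simpa [tensorComul_tmul, hC.counit_comul_left, hD.counit_comul_left] using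
      LinearMap.congr_fun factor (hC.comul c ⊗ₜ hD.comul d)

theorem rid_map_tensorCounit_tensorComul (x : C ⊗[k] D) :
    TensorProduct.rid k _ (map .id (hC.tensorCounit hD) (hC.tensorComul hD x)) =
      (congr hC.str hD.str).symm x := by
  have factor : (TensorProduct.rid k (C ⊗[k] D)).toLinearMap ∘ₗ
      map .id (hC.tensorCounit hD) ∘ₗ (tensorTensorTensorComm k C C D D).toLinearMap =
      map ((TensorProduct.rid k C).toLinearMap ∘ₗ map .id hC.counit)
        ((TensorProduct.rid k D).toLinearMap ∘ₗ map .id hD.counit) := by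
    ext
    simp [tensorCounit_tmul, smul_tmul', smul_smul, mul_comm]
  induction x with
  | zero => simp
  | add x x' hx hx' => simp only [map_add, hx, hx']
  | tmul c d =>
    simpa [tensorComul_tmul, hC.counit_comul_right, hD.counit_comul_right] using
      LinearMap.congr_fun factor (hC.comul c ⊗ₜ hD.comul d)

/-- The tensor product of two monoidal Hom-coalgebras. -/
noncomputable def tensor : HomCoalg k (C ⊗[k] D) where
  str := congr hC.str hD.str
  comul := hC.tensorComul hD
  counit := hC.tensorCounit hD
  comul_str := hC.tensorComul_congr_str hD
  counit_str x := by
    suffices hC.tensorCounit hD ∘ₗ (congr hC.str hD.str).toLinearMap = hC.tensorCounit hD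
      from LinearMap.congr_fun this x
    ext c d
    simp [tensorCounit_tmul, hC.counit_str, hD.counit_str]
  hom_coassoc := hC.tensorComul_hom_coassoc hD
  counit_comul_left := hC.lid_map_tensorCounit_tensorComul hD
  counit_comul_right := hC.rid_map_tensorCounit_tensorComul hD

theorem map_comul_comul (φ : C →ₗ[k] M) (c : C) :
    map hC.comul φ (hC.comul c) =
      (TensorProduct.assoc k C C M).symm
        (map hC.str.symm.toLinearMap (map .id (φ ∘ₗ hC.str.toLinearMap) ∘ₗ hC.comul)
          (hC.comul c)) := by
  have factor : map .id (map .id (φ ∘ₗ hC.str.toLinearMap)) ∘ₗ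
      (TensorProduct.assoc k C C C).toLinearMap ∘ₗ map .id hC.str.symm.toLinearMap =
      (TensorProduct.assoc k C C M).toLinearMap ∘ₗ map .id φ := by
    ext
    simp
  have coassoc := congrArg (map .id (map .id (φ ∘ₗ hC.str.toLinearMap))) (hC.hom_coassoc c)
  have factored := LinearMap.congr_fun factor (map hC.comul .id (hC.comul c))
  simp only [LinearMap.comp_apply, LinearEquiv.coe_coe, map_map, LinearMap.id_comp,
    LinearMap.comp_id] at coassoc factored
  rw [LinearEquiv.eq_symm_apply, ← factored, coassoc]

theorem map_id_comul_comul (c : C) :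
    map .id hC.comul (hC.comul c) =
      TensorProduct.assoc k C C C
        (map (map hC.str.toLinearMap .id ∘ₗ hC.comul) hC.str.symm.toLinearMap (hC.comul c)) := by
  have factor : map hC.str.toLinearMap (.id : C ⊗[k] C →ₗ[k] C ⊗[k] C) ∘ₗ
      (TensorProduct.assoc k C C C).toLinearMap =
      (TensorProduct.assoc k C C C).toLinearMap ∘ₗ map (map hC.str.toLinearMap .id) .id := by
    ext
    simp
  have coassoc := congrArg (map hC.str.toLinearMap .id) (hC.hom_coassoc c)
  have factored := LinearMap.congr_fun factor (map hC.comul hC.str.symm.toLinearMap (hC.comul c))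
  simp only [LinearMap.comp_apply, LinearEquiv.coe_coe, map_map, LinearMap.id_comp,
    LinearEquiv.comp_symm] at coassoc factored
  rw [coassoc, factored]

theorem comul_comp_str :
    hC.comul ∘ₗ hC.str.toLinearMap =
      map hC.str.toLinearMap hC.str.toLinearMap ∘ₗ hC.comul :=
  LinearMap.ext hC.comul_str

theorem comul_comp_str_coassoc (c : C) :
    map .id (hC.comul ∘ₗ hC.str.toLinearMap) (hC.comul c) =
      TensorProduct.assoc k C C C
        (map (hC.comul ∘ₗ hC.str.toLinearMap) .id (hC.comul c)) := by
  have factor : map .id (map hC.str.toLinearMap hC.str.toLinearMap) ∘ₗ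
      (TensorProduct.assoc k C C C).toLinearMap ∘ₗ
        map (map hC.str.toLinearMap .id) hC.str.symm.toLinearMap =
      (TensorProduct.assoc k C C C).toLinearMap ∘ₗ
        map (map hC.str.toLinearMap hC.str.toLinearMap) .id := by
    ext
    simp
  have coassoc := congrArg (map .id (map hC.str.toLinearMap hC.str.toLinearMap))
    (hC.map_id_comul_comul c)
  have factored := LinearMap.congr_fun factor (map hC.comul .id (hC.comul c))
  simp only [LinearMap.comp_apply, LinearEquiv.coe_coe, map_map, LinearMap.comp_id]
    at coassoc factored
  rw [comul_comp_str, coassoc, factored]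

/-- The iterated comultiplication `c ↦ c₁ ⊗ (c₂₁ ⊗ c₂₂)`. -/
noncomputable def comul₃ : C →ₗ[k] C ⊗[k] (C ⊗[k] C) :=
  map .id hC.comul ∘ₗ hC.comul

theorem comul₃_str_eq_map_comul (c : C) :
    hC.comul₃ (hC.str c) =
      map hC.str.toLinearMap (hC.comul ∘ₗ hC.str.toLinearMap) (hC.comul c) := by
  simp [comul₃, hC.comul_str, map_map]

theorem comul₃_str (c : C) :
    hC.comul₃ (hC.str c) =
      map hC.str.toLinearMap (map hC.str.toLinearMap hC.str.toLinearMap) (hC.comul₃ c) := by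
  rw [comul₃_str_eq_map_comul, comul_comp_str]
  simp [comul₃, map_map]

theorem lid_map_counit_comul₃ (c : C) :
    TensorProduct.lid k (C ⊗[k] C) (map hC.counit .id (hC.comul₃ c)) =
      hC.comul (hC.str.symm c) := by
  have factor : (TensorProduct.lid k (C ⊗[k] C)).toLinearMap ∘ₗ map hC.counit hC.comul =
      hC.comul ∘ₗ (TensorProduct.lid k C).toLinearMap ∘ₗ map hC.counit .id := by
    ext
    simp
  simpa [comul₃, map_map, hC.counit_comul_left] using LinearMap.congr_fun factor (hC.comul c)

theorem comul₃_str_eq_assoc (c : C) :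
    hC.comul₃ (hC.str c) = map hC.str.toLinearMap .id (TensorProduct.assoc k C C C
      (map (hC.comul ∘ₗ hC.str.toLinearMap) .id (hC.comul c))) := by
  rw [← comul_comp_str_coassoc, map_map, LinearMap.comp_id, LinearMap.id_comp,
    comul₃_str_eq_map_comul]

/-- The reassociation `(p ⊗ (q ⊗ r)) ⊗ c ↦ p ⊗ (γ(q) ⊗ (r ⊗ γ⁻¹(c)))`, which compares the two ways
of comultiplying one leg of `Δ(c)` twice. -/
noncomputable def reassoc : (C ⊗[k] (C ⊗[k] C)) ⊗[k] C →ₗ[k] C ⊗[k] (C ⊗[k] (C ⊗[k] C)) :=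
  map .id ((TensorProduct.assoc k C C C).toLinearMap ∘ₗ
      map (map hC.str.toLinearMap .id) hC.str.symm.toLinearMap) ∘ₗ
    (TensorProduct.assoc k C (C ⊗[k] C) C).toLinearMap

theorem map_comul₃_str_comul (c : C) :
    map .id (hC.comul₃ ∘ₗ hC.str.toLinearMap) (hC.comul c) =
      hC.reassoc (map (hC.comul₃ ∘ₗ hC.str.toLinearMap) .id (hC.comul c)) := by
  let strAssoc : (C ⊗[k] C) ⊗[k] C →ₗ[k] C ⊗[k] (C ⊗[k] C) :=
    map hC.str.toLinearMap .id ∘ₗ (TensorProduct.assoc k C C C).toLinearMap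
  have strAssoc_eq : strAssoc =
      (TensorProduct.assoc k C C C).toLinearMap ∘ₗ map (map hC.str.toLinearMap .id) .id := by
    ext
    simp [strAssoc]
  have comul₃_right : hC.comul₃ ∘ₗ hC.str.toLinearMap =
      (strAssoc ∘ₗ map (hC.comul ∘ₗ hC.str.toLinearMap) .id) ∘ₗ hC.comul :=
    LinearMap.ext hC.comul₃_str_eq_assoc
  have comul₃_left : hC.comul₃ ∘ₗ hC.str.toLinearMap =
      map hC.str.toLinearMap (hC.comul ∘ₗ hC.str.toLinearMap) ∘ₗ hC.comul :=
    LinearMap.ext hC.comul₃_str_eq_map_comul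
  have factor : map .id (strAssoc ∘ₗ map (hC.comul ∘ₗ hC.str.toLinearMap) .id) ∘ₗ
      (TensorProduct.assoc k C C C).toLinearMap ∘ₗ
        map (map hC.str.toLinearMap .id) hC.str.symm.toLinearMap =
      hC.reassoc ∘ₗ map (map hC.str.toLinearMap (hC.comul ∘ₗ hC.str.toLinearMap)) .id := by
    ext
    simp [reassoc, strAssoc_eq]
  calc map .id (hC.comul₃ ∘ₗ hC.str.toLinearMap) (hC.comul c)
    _ = map .id (strAssoc ∘ₗ map (hC.comul ∘ₗ hC.str.toLinearMap) .id)
          (map .id hC.comul (hC.comul c)) := by rw [comul₃_right, map_map, LinearMap.id_comp]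
    _ = hC.reassoc (map (hC.comul₃ ∘ₗ hC.str.toLinearMap) .id (hC.comul c)) := by
      rw [comul₃_left, map_id_comul_comul]
      simpa [map_map] using LinearMap.congr_fun factor (map hC.comul .id (hC.comul c))

theorem map_comul_comul₃_comul (c : C) :
    map hC.comul hC.comul₃ (hC.comul c) =
      (TensorProduct.assoc k C C _).symm (map hC.str.symm.toLinearMap hC.reassoc
        (map .id (map (hC.comul₃ ∘ₗ hC.str.toLinearMap) .id) (hC.comul₃ c))) := by
  have comul₃_comul : map .id (hC.comul₃ ∘ₗ hC.str.toLinearMap) ∘ₗ hC.comul =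
      hC.reassoc ∘ₗ map (hC.comul₃ ∘ₗ hC.str.toLinearMap) .id ∘ₗ hC.comul :=
    LinearMap.ext hC.map_comul₃_str_comul
  rw [map_comul_comul, comul₃_comul]
  simp [comul₃, map_map]

end HomCoalg

namespace HomBialg

/-- The opposite monoidal Hom-bialgebra: opposite multiplication, same comultiplication. -/
def op (hA : HomBialg k A) : HomBialg k A where
  toHomAlg := hA.toHomAlg.op
  __ := hA.toHomCoalg
  comul_mul a b := by
    change hA.comul (hA.mul b a) = map₂ hA.mul.flip hA.mul.flip (hA.comul a) (hA.comul b)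
    rw [hA.comul_mul, map₂_flip_flip, LinearMap.flip_apply]
  comul_one := hA.comul_one
  counit_mul a b := (hA.counit_mul b a).trans (mul_comm _ _)
  counit_one := hA.counit_one

/-- The tensor product of two monoidal Hom-bialgebras. -/
noncomputable def tensor (hA : HomBialg k A) (hB : HomBialg k B) : HomBialg k (A ⊗[k] B) where
  toHomAlg := hA.toHomAlg.tensor hB.toHomAlg
  __ := hA.toHomCoalg.tensor hB.toHomCoalg
  comul_mul x y := by
    suffices (map₂ hA.mul hB.mul).compr₂ (hA.toHomCoalg.tensorComul hB.toHomCoalg) =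
        (map₂ (map₂ hA.mul hB.mul) (map₂ hA.mul hB.mul)).compl₁₂
          (hA.toHomCoalg.tensorComul hB.toHomCoalg) (hA.toHomCoalg.tensorComul hB.toHomCoalg)
      from LinearMap.congr_fun₂ this x y
    ext a b a' b'
    simp [HomCoalg.tensorComul_tmul, hA.comul_mul, hB.comul_mul, tensorTensorTensorComm_map₂]
  comul_one := by
    change tensorTensorTensorComm k A A B B (hA.comul hA.one ⊗ₜ hB.comul hB.one) = _
    rw [hA.comul_one, hB.comul_one]
    rfl
  counit_mul x y := by
    suffices (map₂ hA.mul hB.mul).compr₂ (hA.toHomCoalg.tensorCounit hB.toHomCoalg) =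
        (LinearMap.mul k k).compl₁₂ (hA.toHomCoalg.tensorCounit hB.toHomCoalg)
          (hA.toHomCoalg.tensorCounit hB.toHomCoalg)
      from LinearMap.congr_fun₂ this x y
    ext a b a' b'
    simp [HomCoalg.tensorCounit_tmul, hA.counit_mul, hB.counit_mul, mul_mul_mul_comm]
  counit_one := by
    change hA.counit hA.one * hB.counit hB.one = 1
    rw [hA.counit_one, hB.counit_one, one_mul]

theorem comul_lift_mul (hA : HomBialg k A) (x : A ⊗[k] A) :
    hA.comul (lift hA.mul x) =
      map (lift hA.mul) (lift hA.mul) (hA.toHomCoalg.tensorComul hA.toHomCoalg x) := by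
  have factor (u v : A ⊗[k] A) : map₂ hA.mul hA.mul u v =
      map (lift hA.mul) (lift hA.mul) (tensorTensorTensorComm k A A A A (u ⊗ₜ v)) := by
    suffices map₂ hA.mul hA.mul = curry (map (lift hA.mul) (lift hA.mul) ∘ₗ
        (tensorTensorTensorComm k A A A A).toLinearMap) from LinearMap.congr_fun₂ this u v
    ext
    simp
  suffices hA.comul ∘ₗ lift hA.mul =
      map (lift hA.mul) (lift hA.mul) ∘ₗ hA.toHomCoalg.tensorComul hA.toHomCoalg
    from LinearMap.congr_fun this x
  ext a b
  simp [hA.comul_mul, factor, HomCoalg.tensorComul_tmul]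

theorem comul₃_mul (hA : HomBialg k A) (a b : A) :
    hA.toHomCoalg.comul₃ (hA.mul a b) = map₂ hA.mul (map₂ hA.mul hA.mul)
      (hA.toHomCoalg.comul₃ a) (hA.toHomCoalg.comul₃ b) := by
  have factor : (map₂ hA.mul hA.mul).compr₂ (map .id hA.comul) =
      (map₂ hA.mul (map₂ hA.mul hA.mul)).compl₁₂ (map .id hA.comul) (map .id hA.comul) := by
    ext
    simp [hA.comul_mul]
  exact (congrArg (map .id hA.comul) (hA.comul_mul a b)).trans
    (LinearMap.congr_fun₂ factor (hA.comul a) (hA.comul b))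

end HomBialg

section Convolution

/-- The Hom-convolution `(f * g)(c) = f(c₁) g(c₂)` of linear maps from a monoidal Hom-coalgebra to
a monoidal Hom-algebra. -/
noncomputable def conv (hC : HomCoalg k C) (hA : HomAlg k A) (f g : C →ₗ[k] A) : C →ₗ[k] A :=
  lift hA.mul ∘ₗ map f g ∘ₗ hC.comul

/-- The Hom-convolution unit `c ↦ ε(c) 1`. -/
def convOne (hC : HomCoalg k C) (hA : HomAlg k A) : C →ₗ[k] A :=
  hC.counit.smulRight hA.one

variable {hC : HomCoalg k C} {hD : HomCoalg k D} {hA : HomAlg k A} {hB : HomAlg k B}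

theorem conv_assoc {f g j : C →ₗ[k] A} (hf : ∀ c, f (hC.str c) = hA.str (f c))
    (hj : ∀ c, j (hC.str c) = hA.str (j c)) :
    conv hC hA (conv hC hA f g) j = conv hC hA f (conv hC hA g j) := by
  have hj_symm (c : C) : hA.str (j (hC.str.symm c)) = j c := by
    rw [← hj, LinearEquiv.apply_symm_apply]
  have hf_symm (c : C) : hA.str (f (hC.str.symm c)) = f c := by
    rw [← hf, LinearEquiv.apply_symm_apply]
  let triple : C ⊗[k] (C ⊗[k] C) →ₗ[k] A :=
    lift hA.mul ∘ₗ map (hA.str.toLinearMap ∘ₗ f) (lift hA.mul ∘ₗ map g j)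
  have triple_left : (triple ∘ₗ (TensorProduct.assoc k C C C).toLinearMap) ∘ₗ
      map .id hC.str.symm.toLinearMap = lift hA.mul ∘ₗ map (lift hA.mul ∘ₗ map f g) j := by
    ext a b c
    simp [triple, hA.hom_assoc, hj_symm]
  have triple_right : triple ∘ₗ map hC.str.symm.toLinearMap .id =
      lift hA.mul ∘ₗ map f (lift hA.mul ∘ₗ map g j) := by
    ext a b c
    simp [triple, hf_symm]
  ext c
  calc lift hA.mul (map (lift hA.mul ∘ₗ map f g ∘ₗ hC.comul) j (hC.comul c))
    _ = triple (TensorProduct.assoc k C C C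
        (map hC.comul hC.str.symm.toLinearMap (hC.comul c))) := by
      simpa [map_map, LinearMap.comp_assoc] using
        (LinearMap.congr_fun triple_left (map hC.comul .id (hC.comul c))).symm
    _ = triple (map hC.str.symm.toLinearMap hC.comul (hC.comul c)) := by rw [hC.hom_coassoc]
    _ = lift hA.mul (map f (lift hA.mul ∘ₗ map g j ∘ₗ hC.comul) (hC.comul c)) := by
      simpa [map_map, LinearMap.comp_assoc] using
        LinearMap.congr_fun triple_right (map .id hC.comul (hC.comul c))

theorem convOne_conv {f : C →ₗ[k] A} (hf : ∀ c, f (hC.str c) = hA.str (f c)) :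
    conv hC hA (convOne hC hA) f = f := by
  have factor : lift hA.mul ∘ₗ map (convOne hC hA) f =
      hA.str.toLinearMap ∘ₗ f ∘ₗ (TensorProduct.lid k C).toLinearMap ∘ₗ map hC.counit .id := by
    ext a b
    simp [convOne, hA.one_mul]
  ext c
  simpa [conv, hC.counit_comul_left, ← hf] using LinearMap.congr_fun factor (hC.comul c)

theorem conv_convOne {f : C →ₗ[k] A} (hf : ∀ c, f (hC.str c) = hA.str (f c)) :
    conv hC hA f (convOne hC hA) = f := by
  have factor : lift hA.mul ∘ₗ map f (convOne hC hA) =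
      hA.str.toLinearMap ∘ₗ f ∘ₗ (TensorProduct.rid k C).toLinearMap ∘ₗ map .id hC.counit := by
    ext a b
    simp [convOne, hA.mul_one]
  ext c
  simpa [conv, hC.counit_comul_right, ← hf] using LinearMap.congr_fun factor (hC.comul c)

theorem eq_of_conv_eq_convOne {f g j : C →ₗ[k] A} (hf : ∀ c, f (hC.str c) = hA.str (f c))
    (hj : ∀ c, j (hC.str c) = hA.str (j c)) (hfg : conv hC hA f g = convOne hC hA)
    (hgj : conv hC hA g j = convOne hC hA) : f = j := by
  rw [← conv_convOne hf, ← hgj, ← conv_assoc hf hj, hfg, convOne_conv hj]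

theorem comp_conv {φ : A →ₗ[k] B} (hφ : ∀ a b, φ (hA.mul a b) = hB.mul (φ a) (φ b))
    (f g : C →ₗ[k] A) : φ ∘ₗ conv hC hA f g = conv hC hB (φ ∘ₗ f) (φ ∘ₗ g) := by
  have factor : φ ∘ₗ lift hA.mul ∘ₗ map f g = lift hB.mul ∘ₗ map (φ ∘ₗ f) (φ ∘ₗ g) := by
    ext a b
    simp [hφ]
  ext c
  exact LinearMap.congr_fun factor (hC.comul c)

theorem conv_comp {ψ : D →ₗ[k] C} (hψ : ∀ d, hC.comul (ψ d) = map ψ ψ (hD.comul d))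
    (f g : C →ₗ[k] A) : conv hC hA f g ∘ₗ ψ = conv hD hA (f ∘ₗ ψ) (g ∘ₗ ψ) := by
  ext d
  simp [conv, hψ, map_map]

end Convolution

variable {H : Type*} [AddCommGroup H] [Module k H] (hH : HomHopf k H)

namespace HomHopf

theorem S_str_symm (h : H) : hH.S (hH.str.symm h) = hH.str.symm (hH.S h) := by
  rw [LinearEquiv.eq_symm_apply, ← hH.S_str, LinearEquiv.apply_symm_apply]

theorem S_one : hH.S hH.one = hH.one := by
  have str_S_one := hH.S_mul_comul hH.one
  rw [hH.comul_one, map_tmul, lift.tmul, hH.counit_one, one_smul, LinearMap.id_apply,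
    hH.mul_one] at str_S_one
  exact hH.str.injective (str_S_one.trans hH.str_one.symm)

theorem counit_S (h : H) : hH.counit (hH.S h) = hH.counit h := by
  have factor : hH.counit ∘ₗ lift hH.mul ∘ₗ map hH.S .id =
      hH.counit ∘ₗ hH.S ∘ₗ (TensorProduct.rid k H).toLinearMap ∘ₗ map .id hH.counit := by
    ext a b
    simp [hH.counit_mul, mul_comm]
  have counit_mul_comul := LinearMap.congr_fun factor (hH.comul (hH.str h))
  simpa [hH.S_mul_comul, hH.counit_one, hH.counit_str, hH.counit_comul_right]
    using counit_mul_comul.symm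

theorem conv_S_id : conv hH.toHomCoalg hH.toHomAlg hH.S .id = convOne hH.toHomCoalg hH.toHomAlg :=
  LinearMap.ext hH.S_mul_comul

/-- The linear map `x ⊗ y ↦ S(y) S(x)`. -/
noncomputable def mulFlipS : H ⊗[k] H →ₗ[k] H :=
  lift (hH.mul.flip.compl₁₂ hH.S hH.S)

theorem conv_mul_mulFlipS :
    conv (hH.toHomCoalg.tensor hH.toHomCoalg) hH.toHomAlg (lift hH.mul) hH.mulFlipS =
      convOne (hH.toHomCoalg.tensor hH.toHomCoalg) hH.toHomAlg := by
  have factor (u v : H ⊗[k] H) :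
      lift hH.mul (map (lift hH.mul) hH.mulFlipS (tensorTensorTensorComm k H H H H (u ⊗ₜ v))) =
      lift hH.mul (map (hH.mul.flip (hH.str.symm (lift hH.mul (map .id hH.S v))))
        (hH.str.toLinearMap ∘ₗ hH.S) u) := by
    induction u with
    | zero => simp
    | add u u' hu hu' => simp only [add_tmul, map_add, hu, hu']
    | tmul a d =>
      induction v with
      | zero => simp
      | add v v' hv hv' =>
        simp only [tmul_add, map_add, hv, hv', map_tmul, lift.tmul, LinearMap.add_apply]
      | tmul b c => simp [mulFlipS, hH.mul_mul_mul_mul]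
  ext x y
  change lift hH.mul (map (lift hH.mul) hH.mulFlipS
    (tensorTensorTensorComm k H H H H (hH.comul x ⊗ₜ hH.comul y))) =
      (hH.counit x * hH.counit y) • hH.one
  have flip_one : hH.mul.flip hH.one = hH.str.toLinearMap := LinearMap.ext hH.mul_one
  have str_antipode := hH.lift_mul_map_str (map .id hH.S (hH.comul x))
  rw [map_map, LinearMap.comp_id, hH.mul_S_comul, map_smul, hH.str_one] at str_antipode
  rw [factor, hH.mul_S_comul, map_smul, hH.str_symm_one, map_smul, flip_one, map_smul_left,
    LinearMap.smul_apply, map_smul, str_antipode, smul_smul, mul_comm]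

theorem S_mul (x y : H) : hH.S (hH.mul x y) = hH.mul (hH.S y) (hH.S x) := by
  suffices hH.S ∘ₗ lift hH.mul = hH.mulFlipS from LinearMap.congr_fun this (x ⊗ₜ y)
  refine eq_of_conv_eq_convOne (hC := hH.toHomCoalg.tensor hH.toHomCoalg) (hA := hH.toHomAlg)
    (g := lift hH.mul) (fun z ↦ ?_) (fun z ↦ ?_) ?_ hH.conv_mul_mulFlipS
  · exact (congrArg hH.S (hH.lift_mul_map_str z)).trans (hH.S_str _)
  · suffices hH.mulFlipS ∘ₗ map hH.str.toLinearMap hH.str.toLinearMap =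
      hH.str.toLinearMap ∘ₗ hH.mulFlipS from LinearMap.congr_fun this z
    ext a b
    simp [mulFlipS, hH.S_str, hH.str_mul]
  · refine (conv_comp (hC := hH.toHomCoalg) hH.toHomBialg.comul_lift_mul hH.S .id).symm.trans ?_
    rw [conv_S_id]
    ext a b
    simp [convOne, HomCoalg.tensor, HomCoalg.tensorCounit_tmul, hH.counit_mul]

/-- The contraction `a ⊗ (b ⊗ (c ⊗ d)) ↦ a S(d) ⊗ b S(c)`, whose value at the fourfold
comultiplication of `h` is the convolution product of `Δ` and `h ↦ S(h₂) ⊗ S(h₁)`. -/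
noncomputable def nestedMulS : H ⊗[k] (H ⊗[k] (H ⊗[k] H)) →ₗ[k] H ⊗[k] H :=
  lift (map₂ hH.mul hH.mul) ∘ₗ
    map .id (map hH.S hH.S ∘ₗ (TensorProduct.comm k H H).toLinearMap) ∘ₗ
      (TensorProduct.assoc k H H (H ⊗[k] H)).symm.toLinearMap

theorem nestedMulS_tmul_assoc (a d : H) (u : H ⊗[k] H) :
    hH.nestedMulS (a ⊗ₜ TensorProduct.assoc k H H H (u ⊗ₜ d)) =
      hH.mul a (hH.S d) ⊗ₜ lift hH.mul (map .id hH.S u) := by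
  induction u with
  | zero => simp
  | add u u' hu hu' => simp only [add_tmul, tmul_add, map_add, hu, hu']
  | tmul b c => simp [nestedMulS]

theorem nestedMulS_comp_map_comul :
    hH.nestedMulS ∘ₗ map .id ((TensorProduct.assoc k H H H).toLinearMap ∘ₗ
        map (hH.comul ∘ₗ hH.str.toLinearMap) .id) =
      (TensorProduct.mk k H H).flip hH.one ∘ₗ lift hH.mul ∘ₗ map .id (hH.S ∘ₗ
        (TensorProduct.lid k H).toLinearMap ∘ₗ map hH.counit .id) := by
  ext a b d
  simp [nestedMulS_tmul_assoc, hH.mul_S_comul, hH.counit_str, smul_tmul']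

theorem conv_comul_map_S_comm_comul :
    conv hH.toHomCoalg (hH.toHomAlg.tensor hH.toHomAlg) hH.comul
        (map hH.S hH.S ∘ₗ (TensorProduct.comm k H H).toLinearMap ∘ₗ hH.comul) =
      convOne hH.toHomCoalg (hH.toHomAlg.tensor hH.toHomAlg) := by
  have str_coassoc : map .id (hH.comul ∘ₗ hH.str.toLinearMap) ∘ₗ hH.comul =
      (TensorProduct.assoc k H H H).toLinearMap ∘ₗ map (hH.comul ∘ₗ hH.str.toLinearMap) .id ∘ₗ
        hH.comul := LinearMap.ext hH.toHomCoalg.comul_comp_str_coassoc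
  have counit_comul : (TensorProduct.lid k H).toLinearMap ∘ₗ map hH.counit .id ∘ₗ hH.comul =
      hH.str.symm.toLinearMap := LinearMap.ext hH.counit_comul_left
  ext h
  calc lift (map₂ hH.mul hH.mul) (map hH.comul
        (map hH.S hH.S ∘ₗ (TensorProduct.comm k H H).toLinearMap ∘ₗ hH.comul) (hH.comul h))
    _ = hH.nestedMulS (map hH.str.symm.toLinearMap
          (map .id (hH.comul ∘ₗ hH.str.toLinearMap) ∘ₗ hH.comul) (hH.comul h)) := by
      simp [nestedMulS, ← hH.toHomCoalg.map_comul_comul, map_map, LinearMap.comp_assoc]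
    _ = lift hH.mul (map .id hH.S (map hH.str.symm.toLinearMap hH.str.symm.toLinearMap
          (hH.comul h))) ⊗ₜ hH.one := by
      rw [str_coassoc]
      simpa [map_map, LinearMap.comp_assoc, counit_comul] using LinearMap.congr_fun
        hH.nestedMulS_comp_map_comul (map hH.str.symm.toLinearMap hH.comul (hH.comul h))
    _ = lift hH.mul (map .id hH.S (hH.comul (hH.str.symm h))) ⊗ₜ hH.one :=
      congrArg (fun u ↦ lift hH.mul (map .id hH.S u) ⊗ₜ hH.one)
        (hH.toHomCoalg.comul_str_symm h).symm
    _ = hH.counit h • (hH.one ⊗ₜ hH.one) := by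
      rw [hH.mul_S_comul, hH.toHomCoalg.counit_str_symm, smul_tmul']

theorem comul_S (h : H) :
    hH.comul (hH.S h) = map hH.S hH.S (TensorProduct.comm k H H (hH.comul h)) := by
  suffices hH.comul ∘ₗ hH.S = map hH.S hH.S ∘ₗ (TensorProduct.comm k H H).toLinearMap ∘ₗ hH.comul
    from LinearMap.congr_fun this h
  refine eq_of_conv_eq_convOne (hC := hH.toHomCoalg) (hA := hH.toHomAlg.tensor hH.toHomAlg)
    (g := hH.comul) (fun z ↦ ?_) (fun z ↦ ?_) ?_ hH.conv_comul_map_S_comm_comul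
  · exact (congrArg hH.comul (hH.S_str z)).trans (hH.comul_str _)
  · suffices (map hH.S hH.S ∘ₗ (TensorProduct.comm k H H).toLinearMap) ∘ₗ
        map hH.str.toLinearMap hH.str.toLinearMap =
      map hH.str.toLinearMap hH.str.toLinearMap ∘ₗ
        map hH.S hH.S ∘ₗ (TensorProduct.comm k H H).toLinearMap from
      (congrArg (map hH.S hH.S ∘ₗ (TensorProduct.comm k H H).toLinearMap) (hH.comul_str z)).trans
        (LinearMap.congr_fun this (hH.comul z))
    ext a b
    simp [hH.S_str]
  · refine (comp_conv (hA := hH.toHomAlg) hH.comul_mul hH.S .id).symm.trans ?_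
    rw [conv_S_id]
    ext a
    simp [convOne, HomAlg.tensor, hH.comul_one]

theorem comul_S_str_symm (h : H) :
    hH.comul (hH.S (hH.str.symm h)) =
      map (hH.S ∘ₗ hH.str.symm.toLinearMap) (hH.S ∘ₗ hH.str.symm.toLinearMap)
        (TensorProduct.comm k H H (hH.comul h)) := by
  have comm_str : (TensorProduct.comm k H H).toLinearMap ∘ₗ
      map hH.str.symm.toLinearMap hH.str.symm.toLinearMap =
      map hH.str.symm.toLinearMap hH.str.symm.toLinearMap ∘ₗ
        (TensorProduct.comm k H H).toLinearMap := by
    ext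
    simp
  rw [hH.comul_S, map_comp]
  exact congrArg (map hH.S hH.S) ((congrArg (TensorProduct.comm k H H)
    (hH.toHomCoalg.comul_str_symm h)).trans (LinearMap.congr_fun comm_str (hH.comul h)))

end HomHopf

/-- The map `a ⊗ (b ⊗ c) ↦ α(b) ⊗ (c ⊗ S(α⁻¹(a)))`, through which the coaction `opCoact` factors. -/
noncomputable def coactShuffle : H ⊗[k] (H ⊗[k] H) →ₗ[k] H ⊗[k] (H ⊗[k] H) :=
  map hH.str.toLinearMap .id ∘ₗ (TensorProduct.assoc k H H H).toLinearMap ∘ₗ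
    (TensorProduct.comm k H (H ⊗[k] H)).toLinearMap ∘ₗ
      map (hH.S ∘ₗ hH.str.symm.toLinearMap) .id

@[simp]
theorem coactShuffle_tmul (a b c : H) :
    coactShuffle hH (a ⊗ₜ (b ⊗ₜ c)) = hH.str b ⊗ₜ (c ⊗ₜ hH.S (hH.str.symm a)) :=
  rfl

theorem opCoact_eq (h : H) : opCoact hH h = coactShuffle hH (hH.toHomCoalg.comul₃ h) := by
  simp [opCoact, coactShuffle, HomCoalg.comul₃, map_map]

theorem opCoact_mul (h g : H) :
    opCoact hH (hH.mul h g) = map₂ hH.mul (opMul hH) (opCoact hH h) (opCoact hH g) := by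
  have shuffle_mul : (map₂ hH.mul (map₂ hH.mul hH.mul)).compr₂ (coactShuffle hH) =
      (map₂ hH.mul (opMul hH)).compl₁₂ (coactShuffle hH) (coactShuffle hH) := by
    ext
    simp [opMul, hH.str_mul, hH.str_symm_mul_s14, hH.S_mul]
  simp only [opCoact_eq, hH.toHomBialg.comul₃_mul]
  exact LinearMap.congr_fun₂ shuffle_mul _ _

theorem opCoact_one : opCoact hH hH.one = hH.one ⊗ₜ (hH.one ⊗ₜ hH.one) := by
  simp [opCoact, hH.comul_one, hH.str_one, hH.str_symm_one, hH.S_one]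

theorem opCoact_str (h : H) :
    opCoact hH (hH.str h) =
      map hH.str.toLinearMap (congr hH.str hH.str).toLinearMap (opCoact hH h) := by
  have shuffle_str : coactShuffle hH ∘ₗ
      map hH.str.toLinearMap (map hH.str.toLinearMap hH.str.toLinearMap) =
      map hH.str.toLinearMap (congr hH.str hH.str).toLinearMap ∘ₗ coactShuffle hH := by
    ext
    simp [← hH.S_str]
  rw [opCoact_eq, opCoact_eq]
  exact (congrArg (coactShuffle hH) (hH.toHomCoalg.comul₃_str h)).trans
    (LinearMap.congr_fun shuffle_str _)

theorem counit_opCoact (h : H) :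
    TensorProduct.rid k H (map .id (opCounit hH) (opCoact hH h)) = hH.str.symm h := by
  have factor : (TensorProduct.rid k H).toLinearMap ∘ₗ map .id (opCounit hH) ∘ₗ
      coactShuffle hH =
      hH.str.toLinearMap ∘ₗ ((TensorProduct.rid k H).toLinearMap ∘ₗ map .id hH.counit) ∘ₗ
        (TensorProduct.lid k (H ⊗[k] H)).toLinearMap ∘ₗ map hH.counit .id := by
    ext a b c
    simp [opCounit, hH.counit_S, hH.toHomCoalg.counit_str_symm, smul_smul, mul_comm]
  rw [opCoact_eq]
  simpa [hH.toHomCoalg.lid_map_counit_comul₃, hH.counit_comul_right] using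
    LinearMap.congr_fun factor (hH.toHomCoalg.comul₃ h)

/-- The map `(a ⊗ a') ⊗ (b ⊗ (c ⊗ c')) ↦ b ⊗ ((c ⊗ S(α⁻¹(a'))) ⊗ (c' ⊗ S(α⁻¹(a))))`, through which
both sides of the coassociativity of `opCoact` factor. -/
noncomputable def coassocShuffle : (H ⊗[k] H) ⊗[k] (H ⊗[k] (H ⊗[k] H)) →ₗ[k]
    H ⊗[k] ((H ⊗[k] H) ⊗[k] (H ⊗[k] H)) :=
  map .id (tensorTensorTensorComm k H H H H).toLinearMap ∘ₗ
    (TensorProduct.assoc k H (H ⊗[k] H) (H ⊗[k] H)).toLinearMap ∘ₗ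
      (TensorProduct.comm k (H ⊗[k] H) (H ⊗[k] (H ⊗[k] H))).toLinearMap ∘ₗ
        map (map (hH.S ∘ₗ hH.str.symm.toLinearMap) (hH.S ∘ₗ hH.str.symm.toLinearMap) ∘ₗ
          (TensorProduct.comm k H H).toLinearMap) .id

theorem map_opComul_opCoact (h : H) :
    map hH.str.symm.toLinearMap (opComul hH) (opCoact hH h) =
      coassocShuffle hH (map hH.comul hH.toHomCoalg.comul₃ (hH.comul h)) := by
  have factor : map hH.str.symm.toLinearMap (opComul hH) ∘ₗ coactShuffle hH =
      coassocShuffle hH ∘ₗ map hH.comul (map .id hH.comul) := by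
    ext a b c
    simp [opComul, coassocShuffle, hH.comul_S_str_symm]
  rw [opCoact_eq]
  simpa [HomCoalg.comul₃, map_map] using
    LinearMap.congr_fun factor (map .id hH.comul (hH.comul h))

theorem coassocShuffle_tmul_reassoc (a c : H) (t : H ⊗[k] (H ⊗[k] H)) :
    coassocShuffle hH ((TensorProduct.assoc k H H _).symm
        (hH.str.symm a ⊗ₜ hH.toHomCoalg.reassoc (t ⊗ₜ c))) =
      TensorProduct.assoc k H (H ⊗[k] H) (H ⊗[k] H)
        (coactShuffle hH t ⊗ₜ (hH.str.symm c ⊗ₜ hH.str.symm (hH.S (hH.str.symm a)))) := by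
  suffices coassocShuffle hH ∘ₗ (TensorProduct.assoc k H H _).symm.toLinearMap ∘ₗ
      TensorProduct.mk k H _ (hH.str.symm a) ∘ₗ hH.toHomCoalg.reassoc ∘ₗ
        (TensorProduct.mk k _ H).flip c =
      (TensorProduct.assoc k H (H ⊗[k] H) (H ⊗[k] H)).toLinearMap ∘ₗ
        (TensorProduct.mk k _ _).flip
          (hH.str.symm c ⊗ₜ hH.str.symm (hH.S (hH.str.symm a))) ∘ₗ coactShuffle hH
    from LinearMap.congr_fun this t
  ext
  simp [coassocShuffle, HomCoalg.reassoc, hH.S_str_symm]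

theorem assoc_map_opCoact_opCoact (h : H) :
    TensorProduct.assoc k H (H ⊗[k] H) (H ⊗[k] H)
        (map (opCoact hH) (congr hH.str hH.str).symm.toLinearMap (opCoact hH h)) =
      coassocShuffle hH (map hH.comul hH.toHomCoalg.comul₃ (hH.comul h)) := by
  have factor : (TensorProduct.assoc k H (H ⊗[k] H) (H ⊗[k] H)).toLinearMap ∘ₗ
      map (opCoact hH) (congr hH.str hH.str).symm.toLinearMap ∘ₗ coactShuffle hH =
      coassocShuffle hH ∘ₗ (TensorProduct.assoc k H H _).symm.toLinearMap ∘ₗ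
        map hH.str.symm.toLinearMap hH.toHomCoalg.reassoc ∘ₗ
          map .id (map (hH.toHomCoalg.comul₃ ∘ₗ hH.str.toLinearMap) .id) := by
    ext a b c
    simp [opCoact_eq, coassocShuffle_tmul_reassoc]
  rw [opCoact_eq hH h]
  exact (LinearMap.congr_fun factor _).trans
    (congrArg (coassocShuffle hH) (hH.toHomCoalg.map_comul_comul₃_comul h).symm)

end DoiHomHopf

theorem opTensor_comodule_algebra_general {k : Type*} [CommRing k] {H : Type*}
    [AddCommGroup H] [Module k H] (hH : HomHopf k H) :
    ∃ b : HomBialg k (H ⊗[k] H),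
      b.str = TensorProduct.congr hH.str hH.str ∧
      b.mul = opMul hH ∧
      b.one = hH.one ⊗ₜ[k] hH.one ∧
      b.comul = opComul hH ∧
      b.counit = opCounit hH ∧
      ∃ cm : HomComod b.toHomCoalg H,
        cm.str = hH.str ∧ cm.coact = opCoact hH ∧
        (∀ h g : H, opCoact hH (hH.mul h g) =
          TensorProduct.map₂ hH.mul (opMul hH) (opCoact hH h) (opCoact hH g)) ∧
        opCoact hH hH.one = hH.one ⊗ₜ[k] (hH.one ⊗ₜ[k] hH.one) :=
  ⟨hH.toHomBialg.tensor hH.toHomBialg.op, rfl, rfl, rfl, rfl, rfl,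
    { str := hH.str
      coact := opCoact hH
      hom_coassoc := fun h ↦
        (assoc_map_opCoact_opCoact hH h).trans (map_opComul_opCoact hH h).symm
      counit_coact := counit_opCoact hH
      coact_str := opCoact_str hH },
    rfl, rfl, opCoact_mul hH, opCoact_one hH⟩

/-- `H^op ⊗ H` is a monoidal Hom-bialgebra, and `H` with the coaction
`h ↦ α((h₂)₁) ⊗ ((h₂)₂ ⊗ S(α⁻¹(h₁)))` is a right `H^op ⊗ H`-Hom-comodule algebra. -/
theorem opTensor_comodule_algebra {k : Type*} [CommRing k] {H : Type*}
    [AddCommGroup H] [Module k H] (hH : HomHopf k H) (hS : Function.Bijective hH.S) :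
    ∃ b : HomBialg k (H ⊗[k] H),
      b.str = TensorProduct.congr hH.str hH.str ∧
      b.mul = opMul hH ∧
      b.one = hH.one ⊗ₜ[k] hH.one ∧
      b.comul = opComul hH ∧
      b.counit = opCounit hH ∧
      ∃ cm : HomComod b.toHomCoalg H,
        cm.str = hH.str ∧ cm.coact = opCoact hH ∧
        (∀ h g : H, opCoact hH (hH.mul h g) =
          TensorProduct.map₂ hH.mul (opMul hH) (opCoact hH h) (opCoact hH g)) ∧
        opCoact hH hH.one = hH.one ⊗ₜ[k] (hH.one ⊗ₜ[k] hH.one) :=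
  opTensor_comodule_algebra_general hH
end
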